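/- arXiv:2306.14648 — 2 statements merged into one kernel-verified Lean document; each statement's English description precedes it below -/
import Mathlib

section
/- Let n ∈ ℕ, 0 < α, γ ≤ 1, Δ ∈ ℕ. There exists a constant c₁ = c₁(α, γ, Δ) > 0 such that the following holds for all sufficiently large n. Let T' be an oriented tree on n' vertices with n/2 ≤ n' ≤ n and maximum total degree at most Δ, let V ⊆ V(T') have size γn such that S = {(v, N⁺_{T'}(v), N⁻_{T'}(v)) : v ∈ V} is a set of vertex-disjoint stars, let D be an n-vertex digraph with minimum semidegree at least αn, and let φ: V(T') → V(D) be a uniformly random injective map. Then, with probability tending to 1 as n → ∞, for all u, w ∈ V(D) and * ∈ {+, −}, the number of stars in S that are (u,*,w)-absorbing under φ is at least c₁n. -/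
open Classical in
lemma swap_step {VT VD : Type} [Fintype VT] [Fintype VD] (f : (VT ↪ VD) → ℝ) (hf : ∀ φ, 0 ≤ f φ)
    (G : Finset VT) (hG : ∀ φ ψ : VT ↪ VD, (∀ x ∈ G, φ x = ψ x) → f φ = f ψ)
    (x : VT) (hx : x ∉ G) (A : Finset VD) (p : ℝ)
    (hA : p * Fintype.card VD + G.card ≤ A.card) (hn : 0 < Fintype.card VD) :
    p * ∑ φ, f φ ≤ ∑ φ, f φ * (if φ x ∈ A then 1 else 0) := by
  let e : (VT ↪ VD) × VD → (VT ↪ VD) × VD :=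
    fun q => (q.1.trans (Equiv.swap (q.1 x) q.2).toEmbedding, q.1 x)
  have he : Function.Involutive e := by
    rintro ⟨φ, a⟩
    refine Prod.ext ?_ ?_
    · ext y
      simp [e, Equiv.swap_comm a (φ x)]
    · simp [e]
  have h1 : ∑ q : (VT ↪ VD) × VD, f q.1 * (if q.1 x ∈ A then (1:ℝ) else 0)
      = ∑ q : (VT ↪ VD) × VD, f (e q).1 * (if q.2 ∈ A then (1:ℝ) else 0) := by
    rw [← Equiv.sum_comp (he.toPerm e)]
    refine Finset.sum_congr rfl fun q _ => ?_
    simp [e]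
  have h2 : ∑ q : (VT ↪ VD) × VD, f q.1 * (if q.1 x ∈ A then (1:ℝ) else 0)
      = Fintype.card VD * ∑ φ, f φ * (if φ x ∈ A then 1 else 0) := by
    rw [Fintype.sum_prod_type]
    simp [Finset.mul_sum]
  have h3 : ∑ φ, f φ * (p * Fintype.card VD) ≤
      ∑ q : (VT ↪ VD) × VD, f (e q).1 * (if q.2 ∈ A then (1:ℝ) else 0) := by
    rw [Fintype.sum_prod_type]
    refine Finset.sum_le_sum fun φ _ => ?_
    have hc : (p * Fintype.card VD) ≤ ((A \ G.image φ).card : ℝ) := by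
      have h4 : A.card ≤ (A \ G.image φ).card + G.card := by
        have := Finset.le_card_sdiff (G.image φ) A
        have := Finset.card_image_le (s := G) (f := φ)
        omega
      have h5 : (A.card : ℝ) ≤ (A \ G.image φ).card + G.card := by exact_mod_cast h4
      linarith
    calc f φ * (p * Fintype.card VD) ≤ f φ * ((A \ G.image φ).card : ℝ) :=
          mul_le_mul_of_nonneg_left hc (hf φ)
      _ = ∑ a ∈ A \ G.image φ, f φ := by simp [mul_comm]
      _ = ∑ a ∈ A \ G.image φ, f (e (φ, a)).1 * (if a ∈ A then (1:ℝ) else 0) := by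
          refine Finset.sum_congr rfl fun a ha => ?_
          rw [Finset.mem_sdiff] at ha
          rw [if_pos ha.1, mul_one]
          refine hG _ _ fun y hy => ?_
          have hy1 : φ y ≠ φ x := fun h => hx (φ.injective h ▸ hy)
          have hy2 : φ y ≠ a := fun h => ha.2 (h ▸ Finset.mem_image_of_mem _ hy)
          simp [e, Equiv.swap_apply_of_ne_of_ne hy1 hy2]
      _ ≤ _ := by
          refine Finset.sum_le_sum_of_subset_of_nonneg (Finset.subset_univ _) fun a _ _ => ?_
          refine mul_nonneg (hf _) ?_
          split_ifs <;> norm_num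
  rw [← Finset.sum_mul] at h3
  rw [← h1, h2] at h3
  have hn' : (0:ℝ) < Fintype.card VD := by exact_mod_cast hn
  refine le_of_mul_le_mul_left ?_ hn'
  linarith

open Classical in
lemma star_step {VT VD : Type} [Fintype VT] [Fintype VD] (f : (VT ↪ VD) → ℝ) (hf : ∀ φ, 0 ≤ f φ)
    (G : Finset VT) (hG : ∀ φ ψ : VT ↪ VD, (∀ x ∈ G, φ x = ψ x) → f φ = f ψ)
    (A : VT → Finset VD) (p : ℝ) (hp : 0 ≤ p) (hn : 0 < Fintype.card VD) (F : Finset VT) :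
    Disjoint F G →
    (∀ x ∈ F, p * Fintype.card VD + (G.card + F.card : ℕ) ≤ (A x).card) →
    p ^ F.card * ∑ φ, f φ ≤ ∑ φ, f φ * (if ∀ x ∈ F, φ x ∈ A x then 1 else 0) := by
  induction F using Finset.induction_on with
  | empty => intro _ _; simp
  | insert x F hxF ih =>
    intro hd hA
    rw [Finset.disjoint_insert_left] at hd
    rw [Finset.card_insert_of_notMem hxF] at *
    have ih' := ih hd.2 (fun y hy => by
      refine le_trans ?_ (hA y (Finset.mem_insert_of_mem hy))
      push_cast; linarith)
    have hs := swap_step (fun φ : VT ↪ VD => f φ * (if ∀ x ∈ F, φ x ∈ A x then 1 else 0))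
      (fun φ => mul_nonneg (hf φ) (by split_ifs <;> norm_num)) (G ∪ F)
      (fun φ ψ h => by
        have h1 := hG φ ψ (fun y hy => h y (Finset.mem_union_left _ hy))
        have h2 : (∀ x ∈ F, φ x ∈ A x) ↔ (∀ x ∈ F, ψ x ∈ A x) :=
          forall₂_congr fun y hy => by rw [h y (Finset.mem_union_right _ hy)]
        simp only [h1, h2]) x (by simp [hd.1, hxF]) (A x) p
      (by
        refine le_trans ?_ (hA x (Finset.mem_insert_self _ _))
        have : ((G ∪ F).card : ℝ) ≤ (G.card + (F.card + 1) : ℕ) := by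
          exact_mod_cast (Finset.card_union_le G F).trans (by omega)
        linarith) hn
    calc p ^ (F.card + 1) * ∑ φ, f φ = p * (p ^ F.card * ∑ φ, f φ) := by ring
      _ ≤ _ := mul_le_mul_of_nonneg_left ih' hp
      _ ≤ _ := hs
      _ = _ := by
        refine Finset.sum_congr rfl fun φ _ => ?_
        rw [mul_assoc]
        congr 1
        simp only [Finset.forall_mem_insert]
        by_cases h1 : φ x ∈ A x <;> by_cases h2 : ∀ x ∈ F, φ x ∈ A x <;> simp [h1, h2]

open Classical in
lemma all_stars {VT VD : Type} [Fintype VT] [Fintype VD]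
    (F : VT → Finset VT) (A : VT → VT → Finset VD) (p : ℝ) (hp : 0 ≤ p) (hp1 : p ≤ 1)
    (hn : 0 < Fintype.card VD) (d K : ℕ)
    (hA : ∀ v x, p * Fintype.card VD + (K : ℝ) ≤ (A v x).card) (I : Finset VT) :
    (∀ v ∈ I, (F v).card ≤ d) →
    ((I : Set VT).Pairwise fun v w => Disjoint (F v) (F w)) → I.card * d ≤ K →
    ∑ φ : VT ↪ VD, ∏ v ∈ I, (if ∀ x ∈ F v, φ x ∈ A v x then (1/2 : ℝ) else 1)
      ≤ (1 - p ^ d / 2) ^ I.card * Fintype.card (VT ↪ VD) := by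
  induction I using Finset.induction_on with
  | empty => intro _ _ _; simp
  | insert v I hvI ih =>
    intro hd hdis hK
    rw [Finset.card_insert_of_notMem hvI] at *
    have ih' := ih (fun w hw => hd w (Finset.mem_insert_of_mem hw))
      (hdis.mono (by simp)) (by nlinarith)
    set f : (VT ↪ VD) → ℝ := fun φ => ∏ v ∈ I, (if ∀ x ∈ F v, φ x ∈ A v x then (1/2 : ℝ) else 1)
      with hfdef
    have hf : ∀ φ, 0 ≤ f φ := fun φ => Finset.prod_nonneg fun w _ => by split_ifs <;> norm_num
    have hcb : (I.biUnion F).card ≤ I.card * d :=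
      Finset.card_biUnion_le_card_mul _ _ _ fun w hw => hd w (Finset.mem_insert_of_mem hw)
    have hs := star_step f hf (I.biUnion F) (fun φ ψ h => by
        refine Finset.prod_congr rfl fun w hw => ?_
        have h2 : (∀ x ∈ F w, φ x ∈ A w x) ↔ (∀ x ∈ F w, ψ x ∈ A w x) :=
          forall₂_congr fun y hy => by rw [h y (Finset.mem_biUnion.2 ⟨w, hw, hy⟩)]
        simp only [h2]) (A v) p hp hn (F v)
      (by
        rw [Finset.disjoint_biUnion_right]
        intro w hw
        exact hdis (by simp) (by simp [hw]) (fun h => hvI (h ▸ hw)))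
      (fun x _ => by
        refine le_trans ?_ (hA v x)
        have : ((I.biUnion F).card + (F v).card : ℕ) ≤ K := by
          have := hd v (Finset.mem_insert_self _ _)
          nlinarith
        have : (((I.biUnion F).card + (F v).card : ℕ) : ℝ) ≤ K := by exact_mod_cast this
        linarith)
    have hpow : p ^ d ≤ p ^ (F v).card :=
      pow_le_pow_of_le_one hp hp1 (hd v (Finset.mem_insert_self _ _))
    have hpd : p ^ d ≤ 1 := pow_le_one₀ hp hp1
    have hsum : 0 ≤ ∑ φ, f φ := Finset.sum_nonneg fun φ _ => hf φ
    calc ∑ φ : VT ↪ VD, ∏ w ∈ insert v I, (if ∀ x ∈ F w, φ x ∈ A w x then (1/2 : ℝ) else 1)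
        = ∑ φ, (f φ - 1/2 * (f φ * (if ∀ x ∈ F v, φ x ∈ A v x then 1 else 0))) := by
          refine Finset.sum_congr rfl fun φ _ => ?_
          rw [Finset.prod_insert hvI]
          split_ifs <;> simp only [hfdef] <;> ring
      _ = ∑ φ, f φ - 1/2 * ∑ φ, (f φ * (if ∀ x ∈ F v, φ x ∈ A v x then 1 else 0)) := by
          rw [Finset.sum_sub_distrib, Finset.mul_sum]
      _ ≤ (1 - p ^ d / 2) * ∑ φ, f φ := by nlinarith
      _ ≤ (1 - p ^ d / 2) * ((1 - p ^ d / 2) ^ I.card * Fintype.card (VT ↪ VD)) :=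
          mul_le_mul_of_nonneg_left ih' (by linarith)
      _ = _ := by ring

open Classical in
/-- Tail bound for the number of good stars. -/
lemma tail_bound {VT VD : Type} [Fintype VT] [Fintype VD]
    (F : VT → Finset VT) (A : VT → VT → Finset VD) (p : ℝ) (hp : 0 ≤ p) (hp1 : p ≤ 1)
    (hn : 0 < Fintype.card VD) (d K : ℕ)
    (hA : ∀ v x, p * Fintype.card VD + (K : ℝ) ≤ (A v x).card) (I : Finset VT)
    (hd : ∀ v ∈ I, (F v).card ≤ d)
    (hdis : (I : Set VT).Pairwise fun v w => Disjoint (F v) (F w)) (hK : I.card * d ≤ K)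
    (t : ℝ) (B : Finset (VT ↪ VD))
    (hB : ∀ φ ∈ B, ((I.filter fun v => ∀ x ∈ F v, φ x ∈ A v x).card : ℝ) ≤ t) :
    (B.card : ℝ) ≤ Real.exp (t - p ^ d / 2 * I.card) * Fintype.card (VT ↪ VD) := by
  have h := all_stars F A p hp hp1 hn d K hA I hd hdis hK
  have hpd : p ^ d ≤ 1 := pow_le_one₀ hp hp1
  have h1 : (B.card : ℝ) * Real.exp (-t) ≤
      ∑ φ : VT ↪ VD, ∏ v ∈ I, (if ∀ x ∈ F v, φ x ∈ A v x then (1/2 : ℝ) else 1) := by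
    calc (B.card : ℝ) * Real.exp (-t) = ∑ φ ∈ B, Real.exp (-t) := by simp
      _ ≤ ∑ φ ∈ B, ∏ v ∈ I, (if ∀ x ∈ F v, φ x ∈ A v x then (1/2 : ℝ) else 1) := by
        refine Finset.sum_le_sum fun φ hφ => ?_
        rw [Finset.prod_ite]
        simp only [Finset.prod_const, one_pow, mul_one]
        set X := (I.filter fun v => ∀ x ∈ F v, φ x ∈ A v x).card with hX
        calc Real.exp (-t) ≤ Real.exp (X * (-1 : ℝ)) := by
              apply Real.exp_le_exp.2; have := hB φ hφ; linarith
          _ = Real.exp (-1) ^ X := by rw [Real.exp_nat_mul]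
          _ ≤ (1/2) ^ X := by
              refine pow_le_pow_left₀ (Real.exp_pos _).le ?_ _
              rw [Real.exp_neg, one_div]
              apply inv_anti₀ (by norm_num)
              have := Real.add_one_le_exp (1:ℝ); linarith
      _ ≤ _ := Finset.sum_le_sum_of_subset_of_nonneg (Finset.subset_univ _) fun φ _ _ =>
        Finset.prod_nonneg fun w _ => by split_ifs <;> norm_num
  have h2 : (1 - p ^ d / 2) ^ I.card ≤ Real.exp (- (p ^ d / 2 * I.card)) := by
    have : Real.exp (- (p ^ d / 2 * I.card)) = Real.exp (-(p ^ d / 2)) ^ I.card := by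
      rw [← Real.exp_nat_mul]; congr 1; ring
    rw [this]
    refine pow_le_pow_left₀ (by linarith) ?_ _
    have := Real.add_one_le_exp (-(p ^ d / 2)); linarith
  have h3 : (B.card : ℝ) * Real.exp (-t) ≤
      Real.exp (- (p ^ d / 2 * I.card)) * Fintype.card (VT ↪ VD) :=
    h1.trans (h.trans (mul_le_mul_of_nonneg_right h2 (by positivity)))
  calc (B.card : ℝ) = Real.exp t * (B.card * Real.exp (-t)) := by
        rw [mul_comm (B.card : ℝ), ← mul_assoc, ← Real.exp_add]; simp
    _ ≤ Real.exp t * (Real.exp (- (p ^ d / 2 * I.card)) * Fintype.card (VT ↪ VD)) :=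
        mul_le_mul_of_nonneg_left h3 (Real.exp_pos _).le
    _ = _ := by rw [← mul_assoc, ← Real.exp_add]; congr 2

lemma exp_small (c ε : ℝ) (hc : 0 < c) (hε : 0 < ε) :
    ∃ n₀ : ℕ, 1 ≤ n₀ ∧ ∀ n : ℕ, n₀ ≤ n → 2 * (n : ℝ) ^ 2 * Real.exp (1 - c * n) ≤ ε := by
  have h := (Real.tendsto_pow_mul_exp_neg_atTop_nhds_zero 2).comp
    ((tendsto_natCast_atTop_atTop (R := ℝ)).const_mul_atTop hc)
  have hpos : 0 < ε * c ^ 2 / (2 * Real.exp 1) := by positivity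
  obtain ⟨N, hN⟩ := Filter.eventually_atTop.1 (h.eventually (gt_mem_nhds hpos))
  refine ⟨max N 1, le_max_right _ _, fun n hn => ?_⟩
  have := hN n (le_of_max_le_left hn)
  simp only [Function.comp] at this
  rw [lt_div_iff₀ (by positivity)] at this
  have h2 : Real.exp (1 - c * n) = Real.exp 1 * Real.exp (-(c * n)) := by
    rw [← Real.exp_add]; congr 1
  rw [h2]
  refine le_of_mul_le_mul_right ?_ (show 0 < c ^ 2 by positivity)
  nlinarith

open Classical in
/-- The tail bound for one fixed pair of target vertices. -/
lemma pair_bound {VT VD : Type} [Fintype VT] [Fintype VD] (α γ δ : ℝ) (hα : 0 < α) (hα1 : α ≤ 1)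
    (Δ : ℕ) (hδ : 0 < δ) (hδγ : δ ≤ γ) (hδα : δ * (Δ + 1 : ℕ) ≤ α / 2)
    (n : ℕ) (hn : 1 ≤ n)
    (T : VT → VT → Prop) (hirr : ∀ a, ¬ T a a) (hasym : ∀ a b, T a b → ¬ T b a)
    (hdeg : ∀ v : VT, {u | T v u}.ncard + {u | T u v}.ncard ≤ Δ)
    (Vs : Set VT) (hVs : (Vs.ncard : ℝ) = γ * n)
    (hdis : Vs.Pairwise fun v w =>
        Disjoint ({v} ∪ {u | T v u} ∪ {u | T u v})
                 ({w} ∪ {u | T w u} ∪ {u | T u w}))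
    (hVD : Fintype.card VD = n)
    (P Q R : Set VD) (hP : α * n ≤ P.ncard) (hQ : α * n ≤ Q.ncard) (hR : α * n ≤ R.ncard)
    (B : Finset (VT ↪ VD))
    (hB : ∀ φ ∈ B, ({v ∈ Vs | φ v ∈ P ∧ (∀ x, T v x → φ x ∈ Q) ∧
            (∀ x, T x v → φ x ∈ R)}.ncard : ℝ) ≤ (α / 2) ^ (Δ + 1) * δ / 4 * n) :
    (B.card : ℝ) ≤ Real.exp (1 - (α / 2) ^ (Δ + 1) * δ / 4 * n) * Fintype.card (VT ↪ VD) := by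
  let F : VT → Finset VT := fun v => ({v} ∪ {u | T v u} ∪ {u | T u v} : Set VT).toFinset
  let A : VT → VT → Finset VD := fun v x =>
    if x = v then P.toFinset else if T v x then Q.toFinset else R.toFinset
  have hn' : (1:ℝ) ≤ n := by exact_mod_cast hn
  set k := ⌊δ * n⌋₊ with hk
  have hk1 : (k : ℝ) ≤ δ * n := Nat.floor_le (by positivity)
  have hk2 : δ * n < k + 1 := Nat.lt_floor_add_one _
  have hkV : k ≤ Vs.toFinset.card := by
    rw [← Set.ncard_eq_toFinset_card']
    have : (k : ℝ) ≤ Vs.ncard := by rw [hVs]; nlinarith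
    exact_mod_cast this
  obtain ⟨I, hIV, hIk⟩ := Finset.exists_subset_card_eq hkV
  have hIV' : ∀ v ∈ I, v ∈ Vs := fun v hv => Set.mem_toFinset.1 (hIV hv)
  have hkK : ((k * (Δ + 1) : ℕ) : ℝ) ≤ α / 2 * n := by
    push_cast at *
    nlinarith
  have key := tail_bound F A (α / 2) (by linarith) (by linarith) (by omega) (Δ + 1) (k * (Δ + 1))
    (fun v x => by
      rw [hVD]
      have : α * n ≤ (A v x).card := by
        simp only [A]
        split_ifs <;> rw [← Set.ncard_eq_toFinset_card'] <;> assumption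
      linarith) I
    (fun v _ => by
      simp only [F]
      rw [← Set.ncard_eq_toFinset_card']
      have h1 := Set.ncard_union_le ({v} ∪ {u | T v u}) {u | T u v}
      have h2 := Set.ncard_union_le {v} {u | T v u}
      have h3 := hdeg v
      rw [Set.ncard_singleton] at h2
      omega)
    (fun v hv w hw hvw => by
      simp only [F]
      rw [Set.disjoint_toFinset]
      exact hdis (hIV' v hv) (hIV' w hw) hvw)
    (by rw [hIk]) ((α / 2) ^ (Δ + 1) * δ / 4 * n) B
    (fun φ hφ => by
      refine le_trans ?_ (hB φ hφ)
      rw [← Set.ncard_coe_finset]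
      refine Nat.cast_le.2 (Set.ncard_le_ncard (fun v hv => ?_) (Set.toFinite {v ∈ Vs | φ v ∈ P ∧
        (∀ x, T v x → φ x ∈ Q) ∧ (∀ x, T x v → φ x ∈ R)}))
      rw [Finset.mem_coe, Finset.mem_filter] at hv
      obtain ⟨hvI, hv⟩ := hv
      refine ⟨hIV' v hvI, ?_, fun x hx => ?_, fun x hx => ?_⟩
      · simpa [A] using hv v (Set.mem_toFinset.2 (Or.inl (Or.inl rfl)))
      · have hne : x ≠ v := fun h => hirr v (h ▸ hx)
        simpa [A, hne, hx] using hv x (Set.mem_toFinset.2 (Or.inl (Or.inr hx)))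
      · have hne : x ≠ v := fun h => hirr v (h ▸ hx)
        simpa [A, hne, hasym _ _ hx] using hv x (Set.mem_toFinset.2 (Or.inr hx)))
  refine key.trans (mul_le_mul_of_nonneg_right (Real.exp_le_exp.2 ?_) (by positivity))
  rw [hIk]
  have hq1 : (α / 2) ^ (Δ + 1) ≤ 1 := pow_le_one₀ (by linarith) (by linarith)
  have hq0 : 0 < (α / 2) ^ (Δ + 1) := by positivity
  nlinarith

/-- For a uniformly random injection `φ` of the vertices of an almost spanning bounded-degree
oriented tree `T'` into an `n`-vertex digraph `D` of minimum semidegree at least `αn`, with high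
probability every pair `(u, w)` of vertices of `D` and every direction admits at least `c₁n`
absorbing stars among a fixed family of `γn` vertex-disjoint stars of `T'`. -/
theorem stmt_11 (α γ : ℝ) (hα : 0 < α ∧ α ≤ 1) (hγ : 0 < γ ∧ γ ≤ 1) (Δ : ℕ) :
    ∃ c₁ : ℝ, 0 < c₁ ∧ ∀ ε : ℝ, 0 < ε → ∃ n₀ : ℕ, ∀ n : ℕ, n₀ ≤ n →
    ∀ (VT VD : Type) [Fintype VT] [Fintype VD],
    ∀ n' : ℕ, Fintype.card VT = n' → n ≤ 2 * n' → n' ≤ n →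
    ∀ T : VT → VT → Prop, (∀ a, ¬ T a a) → (∀ a b, T a b → ¬ T b a) →
      (SimpleGraph.fromRel T).IsTree →
      (∀ v : VT, {u | T v u}.ncard + {u | T u v}.ncard ≤ Δ) →
    ∀ Vs : Set VT, (Vs.ncard : ℝ) = γ * n →
      (Vs.Pairwise fun v w =>
        Disjoint ({v} ∪ {u | T v u} ∪ {u | T u v})
                 ({w} ∪ {u | T w u} ∪ {u | T u w})) →
    Fintype.card VD = n →
    ∀ D : VD → VD → Prop,
      (∀ v : VD, α * n ≤ ({x | D v x}.ncard : ℝ) ∧ α * n ≤ ({x | D x v}.ncard : ℝ)) →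
    (1 - ε) * (Nat.card (VT ↪ VD) : ℝ) ≤
      (Nat.card {φ : VT ↪ VD // ∀ u w : VD,
        (c₁ * n ≤ ({v ∈ Vs | D u (φ v) ∧ (∀ x, T v x → D w (φ x)) ∧
            (∀ x, T x v → D (φ x) w)}.ncard : ℝ)) ∧
        (c₁ * n ≤ ({v ∈ Vs | D (φ v) u ∧ (∀ x, T v x → D w (φ x)) ∧
            (∀ x, T x v → D (φ x) w)}.ncard : ℝ))} : ℝ) := by
  classical
  obtain ⟨hα, hα1⟩ := hα
  obtain ⟨hγ, hγ1⟩ := hγ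
  have hΔ : (0:ℝ) < (Δ + 1 : ℕ) := by positivity
  set δ : ℝ := min γ (α / 2 / (Δ + 1 : ℕ)) with hδdef
  have hδ : 0 < δ := lt_min hγ (by positivity)
  have hδγ : δ ≤ γ := min_le_left _ _
  have hδα : δ * (Δ + 1 : ℕ) ≤ α / 2 := by
    rw [← le_div_iff₀ hΔ]; exact min_le_right _ _
  set c : ℝ := (α / 2) ^ (Δ + 1) * δ / 4 with hc
  have hc0 : 0 < c := by positivity
  refine ⟨c, hc0, fun ε hε => ?_⟩
  obtain ⟨n₀, hn₀, hsmall⟩ := exp_small c ε hc0 hε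
  refine ⟨n₀, fun n hn => ?_⟩
  intro VT VD _ _ n' _ _ _ T hirr hasym _ hdeg Vs hVs hdis hVD D hD
  have pb := fun P Q R hP hQ hR B hB => pair_bound α γ δ hα hα1 Δ hδ hδγ hδα n (hn₀.trans hn)
    T hirr hasym hdeg Vs hVs hdis hVD P Q R hP hQ hR B hB
  rw [← hc] at pb
  let B1 : VD × VD → Finset (VT ↪ VD) := fun q => Finset.univ.filter fun φ =>
    ({v ∈ Vs | D q.1 (φ v) ∧ (∀ x, T v x → D q.2 (φ x)) ∧
            (∀ x, T x v → D (φ x) q.2)}.ncard : ℝ) ≤ c * n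
  let B2 : VD × VD → Finset (VT ↪ VD) := fun q => Finset.univ.filter fun φ =>
    ({v ∈ Vs | D (φ v) q.1 ∧ (∀ x, T v x → D q.2 (φ x)) ∧
            (∀ x, T x v → D (φ x) q.2)}.ncard : ℝ) ≤ c * n
  have hB1 : ∀ q, ((B1 q).card : ℝ) ≤ Real.exp (1 - c * n) * Fintype.card (VT ↪ VD) := fun q =>
    pb {x | D q.1 x} {x | D q.2 x} {x | D x q.2} (hD _).1 (hD _).1 (hD _).2 _
      (fun φ hφ => (Finset.mem_filter.1 hφ).2)
  have hB2 : ∀ q, ((B2 q).card : ℝ) ≤ Real.exp (1 - c * n) * Fintype.card (VT ↪ VD) := fun q =>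
    pb {x | D x q.1} {x | D q.2 x} {x | D x q.2} (hD _).2 (hD _).1 (hD _).2 _
      (fun φ hφ => (Finset.mem_filter.1 hφ).2)
  let Good : (VT ↪ VD) → Prop := fun φ => ∀ u w : VD,
        (c * n ≤ ({v ∈ Vs | D u (φ v) ∧ (∀ x, T v x → D w (φ x)) ∧
            (∀ x, T x v → D (φ x) w)}.ncard : ℝ)) ∧
        (c * n ≤ ({v ∈ Vs | D (φ v) u ∧ (∀ x, T v x → D w (φ x)) ∧
            (∀ x, T x v → D (φ x) w)}.ncard : ℝ))
  change (1 - ε) * (Nat.card (VT ↪ VD) : ℝ) ≤ (Nat.card {φ // Good φ} : ℝ)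
  rw [Nat.card_eq_fintype_card, Nat.card_eq_fintype_card, Fintype.card_subtype]
  set Gd : Finset (VT ↪ VD) := Finset.univ.filter Good with hGd
  have hcover : (Finset.univ : Finset (VT ↪ VD)) ⊆
      Gd ∪ Finset.univ.biUnion (fun q => B1 q ∪ B2 q) := by
    intro φ _
    rw [Finset.mem_union]
    by_contra hcon
    rw [not_or] at hcon
    obtain ⟨h1, h2⟩ := hcon
    apply h1
    rw [hGd, Finset.mem_filter]
    refine ⟨Finset.mem_univ _, fun u w => ?_⟩
    simp only [Finset.mem_biUnion, Finset.mem_univ, true_and, not_exists, Finset.mem_union,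
      not_or, B1, B2, Finset.mem_filter, not_le] at h2
    exact ⟨(h2 (u, w)).1.le, (h2 (u, w)).2.le⟩
  have hcard : (Fintype.card (VT ↪ VD) : ℝ) ≤
      Gd.card + ∑ q : VD × VD, (((B1 q).card : ℝ) + (B2 q).card) := by
    have h1 := Finset.card_le_card hcover
    rw [Finset.card_univ] at h1
    have h2 := h1.trans (Finset.card_union_le _ _)
    have h3 := h2.trans (Nat.add_le_add_left (Finset.card_biUnion_le.trans
      (Finset.sum_le_sum fun q _ => Finset.card_union_le (B1 q) (B2 q))) _)
    exact_mod_cast h3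
  have hsum : ∑ q : VD × VD, (((B1 q).card : ℝ) + (B2 q).card) ≤
      ε * Fintype.card (VT ↪ VD) := by
    calc _ ≤ ∑ q : VD × VD, 2 * (Real.exp (1 - c * n) * Fintype.card (VT ↪ VD)) :=
          Finset.sum_le_sum fun q _ => by linarith [hB1 q, hB2 q]
      _ = (2 * (n : ℝ) ^ 2 * Real.exp (1 - c * n)) * Fintype.card (VT ↪ VD) := by
          rw [Finset.sum_const, Finset.card_univ, Fintype.card_prod, hVD]
          simp only [nsmul_eq_mul]; push_cast; ring
      _ ≤ _ := mul_le_mul_of_nonneg_right (hsmall n hn) (by positivity)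
  linarith
end

section
/- For each 0 < α < 1 and Δ ∈ ℕ, there exists a constant c = c(α, Δ) such that the following holds: if D_α is an n-vertex digraph with minimum semidegree at least αn, R ∼ D(n, c/n) is a binomial random digraph on the same vertex set, and T is an n-vertex oriented tree with maximum total degree at most Δ, then with probability tending to 1 as n → ∞, T is a subgraph of D_α ∪ R. -/
open MeasureTheory

section PartA
set_option linter.unusedSectionVars false
variable {J : Type*} [Fintype J] [DecidableEq J]

/-- expected value of `F` on the random set with edge probabilities `r`, together with `K` -/
noncomputable def lossX (F : Finset J → ℝ) (r : J → ℝ) (K : Finset J) : ℝ :=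
  ∑ T ∈ (Finset.univ : Finset J).powerset,
    ((∏ e ∈ T, r e) * ∏ e ∈ Finset.univ \ T, (1 - r e)) * F (T ∪ K)

noncomputable def lossY (F : Finset J → ℝ) (r : J → ℝ) (e0 : J) (K : Finset J) : ℝ :=
  ∑ T ∈ (Finset.univ.erase e0 : Finset J).powerset,
    ((∏ e ∈ T, r e) * ∏ e ∈ (Finset.univ.erase e0) \ T, (1 - r e)) * F (T ∪ K)

lemma lossX_split (F : Finset J → ℝ) (r : J → ℝ) (e0 : J) (K : Finset J) :
    lossX F r K = r e0 * lossY F r e0 (insert e0 K) + (1 - r e0) * lossY F r e0 K := by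
  unfold lossX lossY
  conv_lhs => rw [← Finset.insert_erase (Finset.mem_univ e0)]
  rw [Finset.sum_powerset_insert (Finset.notMem_erase e0 _), add_comm, Finset.mul_sum,
    Finset.mul_sum]
  congr 1
  · apply Finset.sum_congr rfl
    intro T hT
    have hT' : e0 ∉ T := fun h => by
      have := Finset.mem_powerset.1 hT h
      simp at this
    rw [Finset.prod_insert hT']
    have h1 : insert e0 (Finset.univ.erase e0) \ insert e0 T = (Finset.univ.erase e0) \ T := by
      ext x; by_cases hx : x = e0 <;> simp [hx]
    have h2 : insert e0 T ∪ K = T ∪ insert e0 K := by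
      ext x; simp
    rw [h1, h2]; ring
  · apply Finset.sum_congr rfl
    intro T hT
    have hT' : e0 ∉ T := fun h => by
      have := Finset.mem_powerset.1 hT h
      simp at this
    have h1 : insert e0 (Finset.univ.erase e0) \ T = insert e0 ((Finset.univ.erase e0) \ T) := by
      ext x; by_cases hx : x = e0 <;> simp [hx, hT']
    rw [h1, Finset.prod_insert (by simp)]; ring

lemma lossY_congr (F : Finset J → ℝ) (r r' : J → ℝ) (e0 : J) (K : Finset J)
    (h : ∀ e, e ≠ e0 → r e = r' e) : lossY F r e0 K = lossY F r' e0 K := by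
  unfold lossY
  apply Finset.sum_congr rfl
  intro T hT
  have hT' := Finset.mem_powerset.1 hT
  congr 2
  · apply Finset.prod_congr rfl
    intro e he
    exact h e (Finset.ne_of_mem_erase (hT' he))
  · apply Finset.prod_congr rfl
    intro e he
    rw [h e (Finset.ne_of_mem_erase (Finset.mem_sdiff.1 he).1)]

lemma lossY_anti (F : Finset J → ℝ) (hF : Antitone F) (r : J → ℝ) (h0 : ∀ e, 0 ≤ r e)
    (h1 : ∀ e, r e ≤ 1) (e0 : J) {K K' : Finset J} (hK : K ⊆ K') :
    lossY F r e0 K' ≤ lossY F r e0 K := by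
  unfold lossY
  apply Finset.sum_le_sum
  intro T _
  apply mul_le_mul_of_nonneg_left
  · exact hF (Finset.union_subset_union le_rfl hK)
  · exact mul_nonneg (Finset.prod_nonneg fun e _ => h0 e)
      (Finset.prod_nonneg fun e _ => by linarith [h1 e])

lemma lossX_anti (F : Finset J → ℝ) (hF : Antitone F) (r : J → ℝ) (h0 : ∀ e, 0 ≤ r e)
    (h1 : ∀ e, r e ≤ 1) {K K' : Finset J} (hK : K ⊆ K') :
    lossX F r K' ≤ lossX F r K := by
  unfold lossX
  apply Finset.sum_le_sum
  intro T _
  apply mul_le_mul_of_nonneg_left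
  · exact hF (Finset.union_subset_union le_rfl hK)
  · exact mul_nonneg (Finset.prod_nonneg fun e _ => h0 e)
      (Finset.prod_nonneg fun e _ => by linarith [h1 e])

lemma lossX_weights (r : J → ℝ) : lossX (fun _ => 1) r ∅ = 1 := by
  unfold lossX
  simp only [mul_one]
  rw [← Finset.prod_add]
  simp

lemma lossX_le_one (F : Finset J → ℝ) (hF : ∀ T, F T ≤ 1) (r : J → ℝ) (h0 : ∀ e, 0 ≤ r e)
    (h1 : ∀ e, r e ≤ 1) (K : Finset J) : lossX F r K ≤ 1 := by
  rw [← lossX_weights r]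
  unfold lossX
  apply Finset.sum_le_sum
  intro T _
  apply mul_le_mul_of_nonneg_left (hF _)
  exact mul_nonneg (Finset.prod_nonneg fun e _ => h0 e)
      (Finset.prod_nonneg fun e _ => by linarith [h1 e])

lemma lossX_eq_zero (F : Finset J → ℝ) (r : J → ℝ) (K : Finset J)
    (h : ∀ T, K ⊆ T → F T = 0) : lossX F r K = 0 := by
  unfold lossX
  apply Finset.sum_eq_zero
  intro T _
  rw [h _ Finset.subset_union_right, mul_zero]

lemma lossX_step (F : Finset J → ℝ) (hF : Antitone F) (r r' : J → ℝ) (h0 : ∀ e, 0 ≤ r' e)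
    (h1 : ∀ e, r' e ≤ 1) (e0 : J) (p1 : ℝ) (hp0 : 0 ≤ p1) (he : r e0 = r' e0 + p1)
    (hne : ∀ e, e ≠ e0 → r e = r' e) (K : Finset J) :
    lossX F r K ≤ p1 * lossX F r' (insert e0 K) + (1 - p1) * lossX F r' K := by
  rw [lossX_split F r e0, lossX_split F r' e0, lossX_split F r' e0 K, Finset.insert_idem,
    lossY_congr F r r' e0 _ hne, lossY_congr F r r' e0 _ hne, he]
  have := lossY_anti F hF r' h0 h1 e0 (Finset.subset_insert e0 K)
  nlinarith [mul_nonneg (mul_nonneg hp0 (h0 e0)) (sub_nonneg.2 this)]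

variable {I : Type*} [Fintype I] [DecidableEq I]

/-- remaining probability of an edge when the cells in `Q` have been queried -/
noncomputable def remP (π : I → J) (p1 : ℝ) (Q : Finset I) (e : J) : ℝ :=
  p1 * ((Finset.univ.filter fun q => q ∉ Q ∧ π q = e).card : ℝ)

lemma remP_nonneg (π : I → J) (p1 : ℝ) (hp : 0 ≤ p1) (Q : Finset I) (e : J) :
    0 ≤ remP π p1 Q e := by unfold remP; positivity

lemma remP_le_one (π : I → J) (p1 : ℝ) (hp : 0 ≤ p1)
    (h : ∀ e, p1 * ((Finset.univ.filter fun q => π q = e).card : ℝ) ≤ 1) (Q : Finset I) (e : J) :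
    remP π p1 Q e ≤ 1 := by
  refine le_trans ?_ (h e)
  unfold remP
  apply mul_le_mul_of_nonneg_left _ hp
  exact_mod_cast Finset.card_le_card (by intro q; simp)

lemma remP_insert_self (π : I → J) (p1 : ℝ) (Q : Finset I) (q : I) (hq : q ∉ Q) :
    remP π p1 Q (π q) = remP π p1 (insert q Q) (π q) + p1 := by
  unfold remP
  have : (Finset.univ.filter fun q' => q' ∉ Q ∧ π q' = π q) =
      insert q (Finset.univ.filter fun q' => q' ∉ insert q Q ∧ π q' = π q) := by
    ext x
    by_cases hx : x = q
    · subst hx; simp [hq]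
    · simp [hx]
  rw [this, Finset.card_insert_of_notMem (by simp)]
  push_cast; ring

lemma remP_insert_ne (π : I → J) (p1 : ℝ) (Q : Finset I) (q : I) (e : J) (he : e ≠ π q) :
    remP π p1 Q e = remP π p1 (insert q Q) e := by
  unfold remP
  congr 3
  ext x
  by_cases hx : x = q
  · subst hx; simp [he.symm]
  · simp [hx]

noncomputable def lossW (F : Finset J → ℝ) (π : I → J) (p1 : ℝ) (Q : Finset I) (K : Finset J) : ℝ :=
  lossX F (remP π p1 Q) K

lemma lossW_step (F : Finset J → ℝ) (hF : Antitone F) (π : I → J) (p1 : ℝ) (hp : 0 ≤ p1)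
    (h : ∀ e, p1 * ((Finset.univ.filter fun q => π q = e).card : ℝ) ≤ 1) (Q : Finset I) (q : I)
    (hq : q ∉ Q) (K : Finset J) :
    lossW F π p1 Q K ≤ p1 * lossW F π p1 (insert q Q) (insert (π q) K)
      + (1 - p1) * lossW F π p1 (insert q Q) K :=
  lossX_step F hF _ _ (remP_nonneg π p1 hp _) (remP_le_one π p1 hp h _) (π q) p1 hp
    (remP_insert_self π p1 Q q hq) (fun e he => remP_insert_ne π p1 Q q e he) K

lemma lossW_mono_insert (F : Finset J → ℝ) (hF : Antitone F) (π : I → J) (p1 : ℝ) (hp : 0 ≤ p1)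
    (h : ∀ e, p1 * ((Finset.univ.filter fun q => π q = e).card : ℝ) ≤ 1) (Q : Finset I) (q : I)
    (K : Finset J) :
    lossW F π p1 Q K ≤ lossW F π p1 (insert q Q) K := by
  by_cases hq : q ∈ Q
  · rw [Finset.insert_eq_of_mem hq]
  · have h1 := lossW_step F hF π p1 hp h Q q hq K
    have h2 : lossW F π p1 (insert q Q) (insert (π q) K) ≤ lossW F π p1 (insert q Q) K :=
      lossX_anti F hF _ (remP_nonneg π p1 hp _) (remP_le_one π p1 hp h _)
        (Finset.subset_insert _ _)
    nlinarith

lemma lossW_mono (F : Finset J → ℝ) (hF : Antitone F) (π : I → J) (p1 : ℝ) (hp : 0 ≤ p1)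
    (h : ∀ e, p1 * ((Finset.univ.filter fun q => π q = e).card : ℝ) ≤ 1) (Q C : Finset I)
    (K : Finset J) :
    lossW F π p1 Q K ≤ lossW F π p1 (Q ∪ C) K := by
  induction C using Finset.induction_on with
  | empty => simp
  | insert q C _ ih =>
    rw [Finset.union_insert]
    exact ih.trans (lossW_mono_insert F hF π p1 hp h _ q K)

lemma lossW_row (F : Finset J → ℝ) (hF : Antitone F) (π : I → J) (p1 : ℝ) (hp : 0 ≤ p1)
    (hp1 : p1 ≤ 1)
    (h : ∀ e, p1 * ((Finset.univ.filter fun q => π q = e).card : ℝ) ≤ 1) (C : Finset I)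
    (K : Finset J) (a b : ℝ) : ∀ Q : Finset I, Disjoint C Q →
    (∀ q ∈ C, lossW F π p1 (Q ∪ C) (insert (π q) K) ≤ a) → lossW F π p1 (Q ∪ C) K ≤ b → 0 ≤ a →
    lossW F π p1 Q K ≤ a + (1 - p1) ^ C.card * b := by
  induction C using Finset.induction_on with
  | empty => intro Q _ _ hb ha; simp at hb ⊢; linarith
  | insert q C hq ih =>
    intro Q hd hC hb ha
    rw [Finset.disjoint_insert_left] at hd
    have hU : Q ∪ insert q C = insert q Q ∪ C := by ext x; simp
    rw [hU] at hC hb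
    have hd' : Disjoint C (insert q Q) := by
      rw [Finset.disjoint_insert_right]; exact ⟨hq, hd.2⟩
    have h1 := ih (insert q Q) hd' (fun x hx => hC x (Finset.mem_insert_of_mem hx)) hb ha
    have h2 := lossW_step F hF π p1 hp h Q q hd.1 K
    have h3 := (lossW_mono F hF π p1 hp h (insert q Q) C (insert (π q) K)).trans
      (hC q (Finset.mem_insert_self _ _))
    rw [Finset.card_insert_of_notMem hq, pow_succ]
    have h4 := mul_le_mul_of_nonneg_left h1 (sub_nonneg.2 hp1)
    have h5 := mul_le_mul_of_nonneg_left h3 hp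
    calc _ ≤ _ := h2
      _ ≤ p1 * a + (1 - p1) * (a + (1 - p1) ^ C.card * b) := add_le_add h5 h4
      _ = _ := by ring

end PartA

section PartB
variable {J : Type*} [Fintype J] [DecidableEq J]

open Classical in
lemma measure_bound (p : ℝ) (hp0 : 0 ≤ p) (hp1 : p ≤ 1) (A : Set (J → Bool)) (ε : ℝ)
    (hX : lossX (fun T : Finset J => if (fun e => decide (e ∈ T)) ∈ A then (0:ℝ) else 1)
      (fun _ => p) ∅ ≤ ε) :
    1 - ENNReal.ofReal ε ≤
      (Measure.pi fun _ : J => (ENNReal.ofReal p) • Measure.dirac true +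
          (ENNReal.ofReal (1 - p)) • Measure.dirac false) A := by
  set ν : Measure Bool := (ENNReal.ofReal p) • Measure.dirac true +
          (ENNReal.ofReal (1 - p)) • Measure.dirac false with hν
  have hνb : ∀ b : Bool, ν {b} = ENNReal.ofReal (if b then p else 1 - p) := by
    intro b; cases b <;> simp [hν]
  have hprob : IsProbabilityMeasure ν := by
    constructor
    simp only [hν, Measure.coe_add, Measure.coe_smul, Pi.add_apply, Pi.smul_apply,
      measure_univ, smul_eq_mul, mul_one]
    rw [← ENNReal.ofReal_add hp0 (by linarith)]
    simp
  have hmeas : ∀ s : Set (J → Bool), MeasurableSet s := fun s => s.toFinite.measurableSet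
  set μ := Measure.pi fun _ : J => ν with hμ
  have hcompl : μ Aᶜ ≤ ENNReal.ofReal ε := by
    refine le_trans (le_of_eq ?_) (ENNReal.ofReal_le_ofReal hX)
    have h1 : μ Aᶜ = ∑ ω ∈ Finset.univ.filter (fun ω => ω ∈ Aᶜ), μ {ω} := by
      rw [sum_measure_singleton]; simp
      rfl
    rw [h1, Finset.sum_filter]
    unfold lossX
    rw [ENNReal.ofReal_sum_of_nonneg]
    · refine Finset.sum_bij' (fun ω _ => Finset.univ.filter fun e => ω e = true)
        (fun T _ => fun e => decide (e ∈ T)) ?_ ?_ ?_ ?_ ?_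
      · simp
      · simp
      · intro ω _; ext e; simp
      · intro T _; ext e; simp
      · intro ω _
        have h2 : (fun e => decide (e ∈ (Finset.univ.filter fun e => ω e = true) ∪ ∅)) = ω := by
          ext e; simp
        beta_reduce
        rw [h2]
        by_cases hω : ω ∈ A
        · simp [hω]
        · simp only [Set.mem_compl_iff, hω, not_false_eq_true, if_true, if_false, mul_one]
          rw [hμ, Measure.pi_singleton]
          simp only [hνb]
          rw [← ENNReal.ofReal_prod_of_nonneg]
          · congr 1
            rw [Finset.prod_ite]
            congr 1
            apply Finset.prod_congr _ (fun _ _ => rfl)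
            ext e; simp
          · intro i _; split_ifs <;> linarith
    · intro T _
      refine mul_nonneg (mul_nonneg (Finset.prod_nonneg fun e _ => hp0)
        (Finset.prod_nonneg fun e _ => by linarith)) ?_
      beta_reduce
      split_ifs <;> norm_num
  rw [tsub_le_iff_right]
  calc (1 : ENNReal) = μ A + μ Aᶜ := by rw [measure_add_measure_compl (hmeas A), measure_univ]
    _ ≤ _ := by gcongr

end PartB


section PartC
variable {V : Type*} [Fintype V] [DecidableEq V] {Tau : Type*} [Fintype Tau]

noncomputable def facP (κ : ℝ) (tgt : Tau → ℕ → ℕ → Finset V) (k : ℕ) (φ : ℕ → V)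
    (τ : Tau) (s i : ℕ) : ℝ :=
  if i < k then (if φ i ∈ tgt τ s i then 1 else 0) else κ

noncomputable def gP (κ : ℝ) (st : ℕ → Finset ℕ) (tgt : Tau → ℕ → ℕ → Finset V) (k : ℕ)
    (φ : ℕ → V) (τ : Tau) (s : ℕ) : ℝ :=
  ∏ i ∈ st s, facP κ tgt k φ τ s i

noncomputable def PhiP (κ : ℝ) (S : Finset ℕ) (st : ℕ → Finset ℕ) (tgt : Tau → ℕ → ℕ → Finset V)
    (k : ℕ) (φ : ℕ → V) : ℝ :=
  ∑ τ, ∏ s ∈ S, (1 - gP κ st tgt k φ τ s / 2)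

variable (κ : ℝ) (S : Finset ℕ) (st : ℕ → Finset ℕ) (tgt : Tau → ℕ → ℕ → Finset V)

lemma facP_nonneg (hκ : 0 ≤ κ) (k : ℕ) (φ : ℕ → V) (τ : Tau) (s i : ℕ) :
    0 ≤ facP κ tgt k φ τ s i := by
  unfold facP; split_ifs <;> first | assumption | norm_num

lemma facP_le_one (hκ : κ ≤ 1) (k : ℕ) (φ : ℕ → V) (τ : Tau) (s i : ℕ) :
    facP κ tgt k φ τ s i ≤ 1 := by
  unfold facP; split_ifs <;> first | assumption | norm_num

lemma gP_nonneg (hκ : 0 ≤ κ) (k : ℕ) (φ : ℕ → V) (τ : Tau) (s : ℕ) :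
    0 ≤ gP κ st tgt k φ τ s := Finset.prod_nonneg fun i _ => facP_nonneg κ tgt hκ k φ τ s i

lemma gP_le_one (hκ0 : 0 ≤ κ) (hκ : κ ≤ 1) (k : ℕ) (φ : ℕ → V) (τ : Tau) (s : ℕ) :
    gP κ st tgt k φ τ s ≤ 1 :=
  Finset.prod_le_one (fun i _ => facP_nonneg κ tgt hκ0 k φ τ s i)
    fun i _ => facP_le_one κ tgt hκ k φ τ s i

lemma termP_pos (hκ0 : 0 ≤ κ) (hκ : κ ≤ 1) (k : ℕ) (φ : ℕ → V) (τ : Tau) (A : Finset ℕ) :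
    0 < ∏ s ∈ A, (1 - gP κ st tgt k φ τ s / 2) :=
  Finset.prod_pos fun s _ => by linarith [gP_le_one κ st tgt hκ0 hκ k φ τ s]

lemma PhiP_pos [Nonempty Tau] (hκ0 : 0 ≤ κ) (hκ : κ ≤ 1) (k : ℕ) (φ : ℕ → V) :
    0 < PhiP κ S st tgt k φ :=
  Finset.sum_pos (fun τ _ => termP_pos κ st tgt hκ0 hκ k φ τ S) Finset.univ_nonempty

lemma facP_update (k : ℕ) (φ : ℕ → V) (u : V) (τ : Tau) (s i : ℕ) (hi : i ≠ k) :
    facP κ tgt (k + 1) (Function.update φ k u) τ s i = facP κ tgt k φ τ s i := by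
  unfold facP
  rw [Function.update_of_ne hi]
  have : i < k + 1 ↔ i < k := by omega
  simp [this]

lemma gP_update (k : ℕ) (φ : ℕ → V) (u : V) (τ : Tau) (s : ℕ) (hk : k ∉ st s) :
    gP κ st tgt (k + 1) (Function.update φ k u) τ s = gP κ st tgt k φ τ s :=
  Finset.prod_congr rfl fun i hi => facP_update κ tgt k φ u τ s i (fun h => hk (h ▸ hi))

lemma termP_update_notMem (k : ℕ) (φ : ℕ → V) (u : V) (τ : Tau) (A : Finset ℕ)
    (hk : ∀ s ∈ A, k ∉ st s) :
    ∏ s ∈ A, (1 - gP κ st tgt (k + 1) (Function.update φ k u) τ s / 2) =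
    ∏ s ∈ A, (1 - gP κ st tgt k φ τ s / 2) :=
  Finset.prod_congr rfl fun s hs => by rw [gP_update κ st tgt k φ u τ s (hk s hs)]

lemma PhiP_fail (hκ0 : 0 ≤ κ) (hκ : κ ≤ 1)
    (hdis : ∀ s ∈ S, ∀ s' ∈ S, s ≠ s' → Disjoint (st s) (st s')) (k : ℕ) (φ : ℕ → V) (u : V) :
    PhiP κ S st tgt (k + 1) (Function.update φ k u) ≤ 2 * PhiP κ S st tgt k φ := by
  unfold PhiP
  rw [Finset.mul_sum]
  apply Finset.sum_le_sum
  intro τ _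
  by_cases h : ∃ s ∈ S, k ∈ st s
  · obtain ⟨s, hs, hks⟩ := h
    rw [← Finset.mul_prod_erase S _ hs, ← Finset.mul_prod_erase S _ hs,
      termP_update_notMem κ st tgt k φ u τ (S.erase s)]
    · have h1 := termP_pos κ st tgt hκ0 hκ k φ τ (S.erase s)
      have h2 := gP_le_one κ st tgt hκ0 hκ k φ τ s
      have h3 := gP_nonneg κ st tgt hκ0 (k+1) (Function.update φ k u) τ s
      rw [← mul_assoc]
      apply mul_le_mul_of_nonneg_right _ h1.le
      linarith
    · intro s' hs' hk'
      rw [Finset.mem_erase] at hs'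
      exact Finset.disjoint_left.1 (hdis s' hs'.2 s hs hs'.1) hk' hks
  · push Not at h
    rw [termP_update_notMem κ st tgt k φ u τ S h]
    linarith [termP_pos κ st tgt hκ0 hκ k φ τ S]

lemma PhiP_avg (hκ0 : 0 ≤ κ) (hκ : κ ≤ 1)
    (hdis : ∀ s ∈ S, ∀ s' ∈ S, s ≠ s' → Disjoint (st s) (st s')) (k : ℕ) (φ : ℕ → V)
    (U : Finset V)
    (hU : ∀ τ, ∀ s ∈ S, ∀ i, κ * (U.card : ℝ) ≤ ((U.filter fun u => u ∈ tgt τ s i).card : ℝ)) :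
    ∑ u ∈ U, PhiP κ S st tgt (k + 1) (Function.update φ k u) ≤ U.card * PhiP κ S st tgt k φ := by
  unfold PhiP
  rw [Finset.mul_sum, Finset.sum_comm]
  apply Finset.sum_le_sum
  intro τ _
  by_cases h : ∃ s ∈ S, k ∈ st s
  · obtain ⟨s, hs, hks⟩ := h
    have hne : ∀ s' ∈ S.erase s, k ∉ st s' := by
      intro s' hs' hk'
      rw [Finset.mem_erase] at hs'
      exact Finset.disjoint_left.1 (hdis s' hs'.2 s hs hs'.1) hk' hks
    have e1 : ∀ u ∈ U, ∏ s ∈ S, (1 - gP κ st tgt (k + 1) (Function.update φ k u) τ s / 2) =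
        (1 - gP κ st tgt (k + 1) (Function.update φ k u) τ s / 2) *
        ∏ s ∈ S.erase s, (1 - gP κ st tgt k φ τ s / 2) := by
      intro u _
      rw [← Finset.mul_prod_erase S _ hs, termP_update_notMem κ st tgt k φ u τ (S.erase s) hne]
    rw [Finset.sum_congr rfl e1, ← Finset.sum_mul, ← Finset.mul_prod_erase S _ hs, ← mul_assoc]
    apply mul_le_mul_of_nonneg_right _ (termP_pos κ st tgt hκ0 hκ k φ τ (S.erase s)).le
    set ρ := ∏ i ∈ (st s).erase k, facP κ tgt k φ τ s i with hρ
    have hρ0 : 0 ≤ ρ := Finset.prod_nonneg fun i _ => facP_nonneg κ tgt hκ0 k φ τ s i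
    have g1 : ∀ u ∈ U, (1 - gP κ st tgt (k + 1) (Function.update φ k u) τ s / 2) =
        1 - (if u ∈ tgt τ s k then 1 else 0) * (ρ / 2) := by
      intro u _
      have : gP κ st tgt (k + 1) (Function.update φ k u) τ s =
          (if u ∈ tgt τ s k then 1 else 0) * ρ := by
        unfold gP
        rw [← Finset.mul_prod_erase _ _ hks]
        congr 1
        · simp [facP]
        · exact Finset.prod_congr rfl fun i hi =>
            facP_update κ tgt k φ u τ s i (Finset.ne_of_mem_erase hi)
      rw [this]; ring
    have g2 : gP κ st tgt k φ τ s = κ * ρ := by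
      unfold gP
      rw [← Finset.mul_prod_erase _ _ hks]
      congr 1
      simp [facP]
    rw [Finset.sum_congr rfl g1, g2, Finset.sum_sub_distrib, ← Finset.sum_mul, Finset.sum_boole]
    simp only [Finset.sum_const, nsmul_eq_mul, mul_one]
    nlinarith [hU τ s hs k]
  · push Not at h
    rw [Finset.sum_congr rfl fun u _ => termP_update_notMem κ st tgt k φ u τ S h]
    simp

lemma PhiP_zero (hκ0 : 0 ≤ κ) (hκ : κ ≤ 1) (D : ℕ) (hD : ∀ s ∈ S, (st s).card ≤ D) (φ : ℕ → V) :
    PhiP κ S st tgt 0 φ ≤ Fintype.card Tau * (1 - κ ^ D / 2) ^ S.card := by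
  unfold PhiP
  have : ∀ τ ∈ (Finset.univ : Finset Tau),
      ∏ s ∈ S, (1 - gP κ st tgt 0 φ τ s / 2) ≤ (1 - κ ^ D / 2) ^ S.card := by
    intro τ _
    rw [← Finset.prod_const]
    apply Finset.prod_le_prod
    · intro s _
      linarith [gP_le_one κ st tgt hκ0 hκ 0 φ τ s]
    · intro s hs
      have : gP κ st tgt 0 φ τ s = κ ^ (st s).card := by
        unfold gP
        rw [← Finset.prod_const]
        exact Finset.prod_congr rfl fun i _ => by simp [facP]
      rw [this]
      have := pow_le_pow_of_le_one hκ0 hκ (hD s hs)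
      linarith
  refine (Finset.sum_le_sum this).trans ?_
  simp

lemma PhiP_end (hκ0 : 0 ≤ κ) (hκ : κ ≤ 1) (k : ℕ) (φ : ℕ → V)
    (hk : ∀ s ∈ S, ∀ i ∈ st s, i < k) (τ : Tau) :
    (1/2 : ℝ) ^ (S.filter fun s => ∀ i ∈ st s, φ i ∈ tgt τ s i).card ≤ PhiP κ S st tgt k φ := by
  unfold PhiP
  refine le_trans (le_of_eq ?_) (Finset.single_le_sum
    (f := fun τ => ∏ s ∈ S, (1 - gP κ st tgt k φ τ s / 2))
    (fun τ _ => (termP_pos κ st tgt hκ0 hκ k φ τ S).le) (Finset.mem_univ τ))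
  rw [← Finset.prod_const, Finset.prod_filter]
  apply Finset.prod_congr rfl
  intro s hs
  unfold gP
  split_ifs with h
  · rw [Finset.prod_eq_one]
    · norm_num
    · intro i hi
      simp [facP, hk s hs i hi, h i hi]
  · push Not at h
    obtain ⟨i, hi, hi'⟩ := h
    rw [Finset.prod_eq_zero hi]
    · norm_num
    · simp [facP, hk s hs i hi, hi']

end PartC


section PartD

/-- deterministic data: the dense digraph and the ordered tree -/
structure TreeData (n Δ : ℕ) where
  N : Bool → Fin n → Finset (Fin n)
  N_symm : ∀ d x y, y ∈ N d x → x ∈ N (!d) y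
  par : ℕ → ℕ
  dir : ℕ → Bool
  idx : ℕ → Fin (Δ + 1)
  par_lt : ∀ i, 0 < i → i < n → par i < i
  idx_inj : ∀ i j, 0 < i → i < n → 0 < j → j < n → par i = par j → idx i = idx j → i = j
  m0 : ℕ
  m0_le : m0 ≤ n
  m0_pos : 0 < m0
  S : Finset ℕ
  S_pos : ∀ s ∈ S, 0 < s
  S_lt : ∀ s ∈ S, s < m0
  S_ch : ∀ s ∈ S, ∀ i, 0 < i → i < n → par i = s → i < m0

abbrev Cell (n Δ : ℕ) := Fin n × (Bool × Bool × Fin (Δ + 1)) × Fin n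

def piE {n : ℕ} (d : Bool) (x u : Fin n) : Fin n × Fin n := if d then (x, u) else (u, x)

def piC {n Δ : ℕ} (q : Cell n Δ) : Fin n × Fin n := piE q.2.1.1 q.1 q.2.2

namespace TreeData
variable {n Δ : ℕ} (G : TreeData n Δ)

def lab (i : ℕ) : Bool × Bool × Fin (Δ + 1) := (G.dir i, decide (i < G.m0), G.idx i)

def EdgeOK (K : Finset (Fin n × Fin n)) (φ : ℕ → Fin n) (i : ℕ) : Prop :=
  φ i ∈ G.N (G.dir i) (φ (G.par i)) ∨ piE (G.dir i) (φ (G.par i)) (φ i) ∈ K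

def Good (φ : ℕ → Fin n) (d : Bool) (x v : Fin n) (s : ℕ) : Prop :=
  φ s ∈ G.N d x ∧ φ (G.par s) ∈ G.N (!G.dir s) v ∧
    ∀ i, 0 < i → i < n → G.par i = s → φ i ∈ G.N (G.dir i) v

def ch (s : ℕ) : Finset ℕ := (Finset.range n).filter fun i => 0 < i ∧ G.par i = s

def st (s : ℕ) : Finset ℕ := insert s (insert (G.par s) (G.ch s))

def tgt (τ : Bool × Fin n × Fin n) (s i : ℕ) : Finset (Fin n) :=
  if i = s then G.N τ.1 τ.2.1 else if 0 < i ∧ G.par i = s then G.N (G.dir i) τ.2.2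
    else G.N (!G.dir s) τ.2.2

def DisjSt : Prop := ∀ s ∈ G.S, ∀ s' ∈ G.S, s ≠ s' → Disjoint (G.st s) (G.st s')

/-- partial embedding of the first `k` vertices -/
def Part (k : ℕ) (K : Finset (Fin n × Fin n)) (φ : ℕ → Fin n) : Prop :=
  Set.InjOn φ (Set.Iio k) ∧ ∀ i, 0 < i → i < k → G.EdgeOK K φ i

def unused (k : ℕ) (φ : ℕ → Fin n) : Finset (Fin n) :=
  Finset.univ \ (Finset.range k).image φ

lemma card_unused (k : ℕ) (φ : ℕ → Fin n) (h : Set.InjOn φ (Set.Iio k)) :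
    (unused k φ).card = n - k := by
  unfold unused
  rw [Finset.card_sdiff_of_subset (Finset.subset_univ _), Finset.card_image_of_injOn (by simpa using h)]
  simp

lemma card_unused_ge (k : ℕ) (φ : ℕ → Fin n) (A : Finset (Fin n)) :
    A.card ≤ (A.filter fun x => x ∈ unused k φ).card + k := by
  have h1 : A ⊆ (A.filter fun x => x ∈ unused k φ) ∪ (Finset.range k).image φ := by
    intro x hx
    by_cases h : x ∈ (Finset.range k).image φ
    · exact Finset.mem_union_right _ h
    · exact Finset.mem_union_left _ (by simp only [Finset.mem_filter, unused, Finset.mem_sdiff, Finset.mem_univ, true_and]; exact ⟨hx, h⟩)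
  have h2 := (Finset.card_le_card h1).trans (Finset.card_union_le _ _)
  have h3 : ((Finset.range k).image φ).card ≤ k := by
    simpa using Finset.card_image_le (s := Finset.range k) (f := φ)
  omega

lemma not_mem_of_unused {k : ℕ} {φ : ℕ → Fin n} {u : Fin n} (hu : u ∈ unused k φ) (i : ℕ)
    (hi : i < k) : φ i ≠ u := by
  intro h
  simp only [unused, Finset.mem_sdiff, Finset.mem_univ, true_and, Finset.mem_image,
    Finset.mem_range, not_exists, not_and] at hu
  exact hu i hi h

lemma extend_part {k : ℕ} (hk0 : 0 < k) (hk : k < n) {K K' : Finset (Fin n × Fin n)} (hK : K ⊆ K')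
    {φ : ℕ → Fin n} (h : G.Part k K φ) {u : Fin n} (hu : u ∈ unused k φ)
    (he : u ∈ G.N (G.dir k) (φ (G.par k)) ∨ piE (G.dir k) (φ (G.par k)) u ∈ K') :
    G.Part (k + 1) K' (Function.update φ k u) := by
  refine ⟨?_, ?_⟩
  · intro i hi j hj hij
    simp only [Set.mem_Iio] at hi hj
    by_cases h1 : i = k <;> by_cases h2 : j = k
    · omega
    · subst h1
      rw [Function.update_self, Function.update_of_ne h2] at hij
      exact absurd hij.symm (not_mem_of_unused hu j (by omega))
    · subst h2
      rw [Function.update_self, Function.update_of_ne h1] at hij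
      exact absurd hij (not_mem_of_unused hu i (by omega))
    · rw [Function.update_of_ne h1, Function.update_of_ne h2] at hij
      exact h.1 (show i < k by omega) (show j < k by omega) hij
  · intro i hi hik
    have hp := G.par_lt i hi (by omega)
    unfold EdgeOK
    rw [Function.update_of_ne (show G.par i ≠ k by omega)]
    by_cases h1 : i = k
    · subst h1
      rw [Function.update_self]
      exact he
    · rw [Function.update_of_ne h1]
      exact (h.2 i hi (by omega)).imp id (fun h => hK h)

lemma good_congr {φ φ' : ℕ → Fin n} {s : ℕ} (h1 : φ' s = φ s) (h2 : φ' (G.par s) = φ (G.par s))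
    (h3 : ∀ i, 0 < i → i < n → G.par i = s → φ' i = φ i) (d : Bool) (x v : Fin n)
    (h : G.Good φ d x v s) : G.Good φ' d x v s := by
  refine ⟨h1 ▸ h.1, h2 ▸ h.2.1, fun i hi hin hp => ?_⟩
  rw [h3 i hi hin hp]; exact h.2.2 i hi hin hp

lemma par_not_mem (hd : G.DisjSt) {s : ℕ} (hs : s ∈ G.S) : G.par s ∉ G.S := by
  intro h
  have h1 := G.par_lt s (G.S_pos s hs) (lt_of_lt_of_le (G.S_lt s hs) G.m0_le)
  have h2 : G.par s ∈ G.st s := by simp [st]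
  have h3 : G.par s ∈ G.st (G.par s) := by simp [st]
  exact Finset.disjoint_left.1 (hd s hs _ h (by omega)) h2 h3

open Classical in
lemma switch_part (hd : G.DisjSt) {k : ℕ} (hk : k < n) (hmk : G.m0 ≤ k)
    {K : Finset (Fin n × Fin n)} {φ : ℕ → Fin n} (h : G.Part k K φ) {A : Finset ℕ} (hA : A ⊆ G.S)
    {c : ℕ} (hc : ∀ d x v, c + 1 ≤ (A.filter fun s => G.Good φ d x v s).card) :
    ∃ φ' A', G.Part (k + 1) K φ' ∧ A' ⊆ G.S ∧
      (∀ d x v, c ≤ (A'.filter fun s => G.Good φ' d x v s).card) ∧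
      ∀ i, G.m0 ≤ i → i ≤ k → φ' (G.par i) = φ (G.par i) := by
  have hm := G.m0_pos
  have hU : 0 < (unused k φ).card := by rw [card_unused k φ h.1]; omega
  obtain ⟨v, hv⟩ := Finset.card_pos.1 hU
  obtain ⟨s, hs⟩ := Finset.card_pos.1 (lt_of_lt_of_le (Nat.succ_pos c)
    (hc (G.dir k) (φ (G.par k)) v))
  rw [Finset.mem_filter] at hs
  obtain ⟨hsA, hg⟩ := hs
  have hsS := hA hsA
  have hsm := G.S_lt s hsS
  have hs0 := G.S_pos s hsS
  have hsk : s ≠ k := by omega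
  have hvn : ∀ i, i < k → φ i ≠ v := not_mem_of_unused hv
  have hparS : ∀ i, G.m0 ≤ i → i ≤ k → G.par i ≠ s := fun i h1 h2 h3 => by
    have := G.S_ch s hsS i (by omega) (by omega) h3
    omega
  set φ' := Function.update (Function.update φ s v) k (φ s) with hφ'
  have hk' : φ' k = φ s := by simp [hφ']
  have hs' : φ' s = v := by rw [hφ', Function.update_of_ne hsk, Function.update_self]
  have ho : ∀ i, i ≠ k → i ≠ s → φ' i = φ i := fun i h1 h2 => by
    rw [hφ', Function.update_of_ne h1, Function.update_of_ne h2]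
  refine ⟨φ', A.erase s, ⟨?_, ?_⟩, (Finset.erase_subset _ _).trans hA, ?_, ?_⟩
  · intro i hi j hj hij
    simp only [Set.mem_Iio] at hi hj
    have key : ∀ i, i < k + 1 → ∀ j, j < k + 1 → i ≠ j → φ' i = φ' j → i = k ∨ (i = s ∧ j ≠ k) ∨ j = k ∨ j = s := by
      intro i hi j hj hne hij
      by_contra hcon
      push Not at hcon
      have h1 : i ≠ k := hcon.1
      have h2 : i ≠ s := fun h => hcon.2.2.1 (hcon.2.1 h)
      rw [ho i h1 h2, ho j hcon.2.2.1 hcon.2.2.2] at hij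
      exact hne (h.1 (show i < k by omega) (show j < k by omega) hij)
    have kk : ∀ j, j < k → φ' k ≠ φ' j := by
      intro j hj he
      rw [hk'] at he
      by_cases hjs : j = s
      · subst hjs; rw [hs'] at he; exact hvn j hj he
      · rw [ho j (by omega) hjs] at he
        exact hjs (h.1 (show j < k from hj) (show s < k by omega) he.symm)
    have ks : ∀ j, j < k → j ≠ s → φ' s ≠ φ' j := by
      intro j hj hjs he
      rw [hs', ho j (by omega) hjs] at he
      exact hvn j hj he.symm
    by_contra hne
    rcases key i hi j hj hne hij with h1 | h1 | h1 | h1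
    · subst h1; exact kk j (by omega) hij
    · obtain ⟨rfl, h2⟩ := h1
      exact ks j (by omega) (fun h => hne h.symm) hij
    · subst h1; exact kk i (by omega) hij.symm
    · subst h1
      by_cases h3 : i = k
      · subst h3; exact kk j (by omega) hij
      · exact ks i (by omega) hne hij.symm
  · intro i hi hik
    have hp := G.par_lt i hi (by omega)
    unfold EdgeOK
    by_cases h1 : i = k
    · subst h1
      left
      rw [hk', ho _ (by omega) (hparS i hmk le_rfl)]
      exact hg.1
    by_cases h2 : i = s
    · subst h2
      left
      rw [hs', ho _ (by omega) (by omega)]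
      have := G.N_symm _ _ _ hg.2.1
      simpa using this
    by_cases h3 : G.par i = s
    · left
      rw [h3, hs', ho i h1 h2]
      exact hg.2.2 i hi (by omega) h3
    · rw [ho i h1 h2, ho _ (by omega) h3]
      exact h.2 i hi (by omega)
  · intro d x w
    have h1 : (A.filter fun s => G.Good φ d x w s).erase s ⊆
        ((A.erase s).filter fun s => G.Good φ' d x w s) := by
      intro s' h'
      rw [Finset.mem_erase, Finset.mem_filter] at h'
      rw [Finset.mem_filter, Finset.mem_erase]
      obtain ⟨hne, hA', hg'⟩ := h'
      have hS' := hA hA'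
      have hm' := G.S_lt s' hS'
      have hp' := G.par_lt s' (G.S_pos s' hS') (by omega)
      refine ⟨⟨hne, hA'⟩, G.good_congr (ho s' (by omega) hne) (ho _ (by omega) ?_) ?_ d x w hg'⟩
      · intro h; exact G.par_not_mem hd hS' (h ▸ hsS)
      · intro i hi hin hpi
        have := G.S_ch s' hS' i hi hin hpi
        refine ho i (by omega) ?_
        rintro rfl
        exact G.par_not_mem hd hsS (hpi ▸ hS')
    have h2 := Finset.card_le_card h1
    have h3 := Finset.pred_card_le_card_erase (s := A.filter fun s => G.Good φ d x w s) (a := s)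
    have h4 := hc d x w
    omega
  · intro i h1 h2
    have hp := G.par_lt i (by omega) (by omega)
    exact ho _ (by omega) (hparS i h1 h2)

def rowC (k : ℕ) (φ : ℕ → Fin n) (B : Finset (Fin n)) : Finset (Cell n Δ) :=
  B.image fun u => (φ (G.par k), G.lab k, u)

lemma card_rowC (k : ℕ) (φ : ℕ → Fin n) (B : Finset (Fin n)) : (G.rowC k φ B).card = B.card := by
  unfold rowC
  apply Finset.card_image_of_injective
  intro u v h
  simpa using h

def RowProp (W : Finset (Cell n Δ) → Finset (Fin n × Fin n) → ℝ) (k0 : ℕ) (q : ℝ) : Prop :=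
  ∀ Q K C a b, Disjoint C Q → k0 ≤ C.card → (∀ c ∈ C, W (Q ∪ C) (insert (piC c) K) ≤ a) →
    W (Q ∪ C) K ≤ b → 0 ≤ a → 0 ≤ b → W Q K ≤ a + q * b

def ZeroProp (W : Finset (Cell n Δ) → Finset (Fin n × Fin n) → ℝ) : Prop :=
  ∀ Q K φ, G.Part n K φ → W Q K = 0

/-- second stage freshness -/
def Fresh2 (k : ℕ) (φ : ℕ → Fin n) (Q : Finset (Cell n Δ)) : Prop :=
  ∀ c ∈ Q, c.2.1.2.1 = false → ∃ i, G.m0 ≤ i ∧ i < k ∧ c.1 = φ (G.par i) ∧ c.2.1 = G.lab i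

lemma fresh2_step {k : ℕ} {φ φ' : ℕ → Fin n} {Q : Finset (Cell n Δ)}
    (h : G.Fresh2 k φ Q) (hφ : ∀ i, G.m0 ≤ i → i ≤ k → φ' (G.par i) = φ (G.par i)) :
    G.Fresh2 (k + 1) φ' Q := by
  intro c hc hf
  obtain ⟨i, h1, h2, h3, h4⟩ := h c hc hf
  exact ⟨i, h1, by omega, by rw [hφ i h1 (by omega), h3], h4⟩

lemma fresh2_step' {k : ℕ} (hmk : G.m0 ≤ k) {φ φ' : ℕ → Fin n} {Q : Finset (Cell n Δ)}
    (h : G.Fresh2 k φ Q) (hφ : ∀ i, G.m0 ≤ i → i ≤ k → φ' (G.par i) = φ (G.par i))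
    (B : Finset (Fin n)) : G.Fresh2 (k + 1) φ' (Q ∪ G.rowC k φ B) := by
  intro c hc hf
  rcases Finset.mem_union.1 hc with hc | hc
  · exact G.fresh2_step h hφ c hc hf
  · obtain ⟨u, _, rfl⟩ := Finset.mem_image.1 hc
    exact ⟨k, hmk, by omega, (hφ k hmk le_rfl).symm, rfl⟩

open Classical in
theorem stage2 (hd : G.DisjSt) (W : Finset (Cell n Δ) → Finset (Fin n × Fin n) → ℝ)
    (hW1 : ∀ Q K, W Q K ≤ 1) (hW0 : G.ZeroProp W) (k0 : ℕ) (q : ℝ) (hq : 0 ≤ q)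
    (hrow : RowProp W k0 q) :
    ∀ m k, k + m = n → G.m0 ≤ k → ∀ φ K Q A b, G.Part k K φ → A ⊆ G.S →
      (∀ d x v, b + min m k0 ≤ (A.filter fun s => G.Good φ d x v s).card) → G.Fresh2 k φ Q →
      W Q K ≤ (1/2 : ℝ) ^ b * (1 + 2 * q) ^ m := by
  intro m
  induction m with
  | zero =>
    intro k hk _ φ K Q A b hP _ _ _
    have : k = n := by omega
    subst this
    rw [hW0 Q K φ hP]
    positivity
  | succ m ih =>
    intro k hk hmk φ K Q A b hP hA hc hQ
    have hkn : k < n := by omega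
    have hm := G.m0_pos
    rcases Nat.eq_zero_or_pos b with hb | hb
    · subst hb
      refine (hW1 Q K).trans ?_
      simpa using one_le_pow₀ (a := 1 + 2 * q) (n := m + 1) (by linarith)
    by_cases hk0 : k0 ≤ m + 1
    · -- query
      set B := unused k φ with hB
      have hBc : B.card = m + 1 := by rw [hB, card_unused k φ hP.1]; omega
      have hpk := G.par_lt k (by omega) hkn
      obtain ⟨b', rfl⟩ : ∃ b', b = b' + 1 := ⟨b - 1, by omega⟩
      have hr := hrow Q K (G.rowC k φ B) ((1/2 : ℝ) ^ (b' + 1) * (1 + 2 * q) ^ m)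
        ((1/2 : ℝ) ^ b' * (1 + 2 * q) ^ m) ?_ ?_ ?_ ?_ (by positivity) (by positivity)
      · refine hr.trans (le_of_eq ?_)
        ring
      · rw [Finset.disjoint_left]
        intro c hc1 hc2
        obtain ⟨u, _, rfl⟩ := Finset.mem_image.1 hc1
        obtain ⟨i, h1, h2, h3, h4⟩ := hQ _ hc2 (by simp [lab]; omega)
        simp only [lab, Prod.mk.injEq] at h3 h4
        have hpi := G.par_lt i (by omega) (by omega)
        have h5 := hP.1 (show G.par k < k by omega) (show G.par i < k by omega) h3
        have := G.idx_inj k i (by omega) (by omega) (by omega) (by omega) h5 h4.2.2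
        omega
      · rw [card_rowC]; omega
      · intro c hc1
        obtain ⟨u, hu, rfl⟩ := Finset.mem_image.1 hc1
        have hup : ∀ i, i < k → Function.update φ k u i = φ i :=
          fun i hi => Function.update_of_ne (by omega) _ _
        refine ih (k + 1) (by omega) (by omega) (Function.update φ k u) _ _ A (b' + 1)
          (G.extend_part (by omega) hkn (Finset.subset_insert _ _) hP hu
            (Or.inr (Finset.mem_insert_self _ _))) hA ?_ ?_
        · intro d x v
          refine le_trans ?_ ((hc d x v).trans (Finset.card_le_card ?_))
          · have : min m k0 ≤ min (m + 1) k0 := min_le_min (by omega) le_rfl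
            omega
          · intro s hs
            rw [Finset.mem_filter] at hs ⊢
            have hsS := hA hs.1
            have := G.S_lt s hsS
            have := G.par_lt s (G.S_pos s hsS) (by omega)
            refine ⟨hs.1, G.good_congr (hup _ (by omega)) (hup _ (by omega)) ?_ d x v hs.2⟩
            intro i hi hin hpi
            have := G.S_ch s hsS i hi hin hpi
            exact hup _ (by omega)
        · apply G.fresh2_step' hmk hQ
          intro i h1 h2
          have := G.par_lt i (by omega) (by omega)
          exact hup _ (by omega)
      · obtain ⟨φ', A', h1, h2, h3, h4⟩ := G.switch_part hd hkn hmk hP hA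
          (c := b' + min (m + 1) k0) (fun d x v => by have := hc d x v; omega)
        refine ih (k + 1) (by omega) (by omega) φ' K _ A' b' h1 h2 ?_ ?_
        · intro d x v
          refine le_trans ?_ (h3 d x v)
          have : min m k0 ≤ min (m + 1) k0 := min_le_min (by omega) le_rfl
          omega
        · exact G.fresh2_step' hmk hQ h4 B
    · -- forced switch
      obtain ⟨φ', A', h1, h2, h3, h4⟩ := G.switch_part hd hkn hmk hP hA
          (c := b + min m k0) (fun d x v => by
            have := hc d x v
            rw [min_eq_left (by omega)] at this ⊢
            omega)
      have := ih (k + 1) (by omega) (by omega) φ' K Q A' b h1 h2 h3 (G.fresh2_step hQ h4)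
      refine this.trans ?_
      apply mul_le_mul_of_nonneg_left _ (by positivity)
      exact pow_le_pow_right₀ (by linarith) (by omega)


/-- first stage freshness -/
def Fresh1 (k : ℕ) (φ : ℕ → Fin n) (Q : Finset (Cell n Δ)) : Prop :=
  ∀ c ∈ Q, ∃ i, 0 < i ∧ i < k ∧ c.1 = φ (G.par i) ∧ c.2.1 = G.lab i

lemma fresh1_step {k : ℕ} (hk : 0 < k) (hkn : k < n) {φ φ' : ℕ → Fin n} {Q : Finset (Cell n Δ)}
    (h : G.Fresh1 k φ Q) (hφ : ∀ i, i < k → φ' i = φ i)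
    (B : Finset (Fin n)) : G.Fresh1 (k + 1) φ' (Q ∪ G.rowC k φ B) := by
  intro c hc
  rcases Finset.mem_union.1 hc with hc | hc
  · obtain ⟨i, h1, h2, h3, h4⟩ := h c hc
    have := G.par_lt i h1 (by omega)
    exact ⟨i, h1, by omega, by rw [hφ _ (by omega), h3], h4⟩
  · obtain ⟨u, _, rfl⟩ := Finset.mem_image.1 hc
    have := G.par_lt k hk hkn
    exact ⟨k, hk, by omega, (hφ _ (by omega)).symm, rfl⟩

lemma st_lt {s : ℕ} (hs : s ∈ G.S) {i : ℕ} (hi : i ∈ G.st s) : i < G.m0 := by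
  have h1 := G.S_lt s hs
  have h2 := G.m0_le
  have h3 := G.par_lt s (G.S_pos s hs) (by omega)
  simp only [st, ch, Finset.mem_insert, Finset.mem_filter, Finset.mem_range] at hi
  rcases hi with rfl | rfl | ⟨h4, h5, h6⟩
  · exact h1
  · omega
  · exact G.S_ch s hs i h5 h4 h6

lemma good_of_tgt {φ : ℕ → Fin n} {d : Bool} {x v : Fin n} {s : ℕ} (hs : s ∈ G.S)
    (h : ∀ i ∈ G.st s, φ i ∈ G.tgt (d, x, v) s i) : G.Good φ d x v s := by
  have h1 := G.S_lt s hs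
  have h2 := G.m0_le
  have h3 := G.par_lt s (G.S_pos s hs) (by omega)
  refine ⟨?_, ?_, ?_⟩
  · have := h s (by simp [st])
    simpa [tgt] using this
  · have := h (G.par s) (by simp [st])
    have h4 : ¬ (0 < G.par s ∧ G.par (G.par s) = s) := by
      rintro ⟨h5, h6⟩
      have := G.par_lt (G.par s) h5 (by omega)
      omega
    unfold tgt at this
    rwa [if_neg (by omega), if_neg h4] at this
  · intro i hi hin hp
    have := h i (by simp [st, ch, hi, hin, hp])
    have h4 := G.par_lt i hi hin
    unfold tgt at this
    rwa [if_neg (by omega), if_pos ⟨hi, hp⟩] at this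

lemma tgt_card (κ : ℝ) (hκ0 : 0 ≤ κ)
    (hN : ∀ d x, κ * n + G.m0 ≤ ((G.N d x).card : ℝ)) {k : ℕ} (hk : k ≤ G.m0) (φ : ℕ → Fin n)
    (τ : Bool × Fin n × Fin n) (s i : ℕ) :
    κ * ((unused k φ).card : ℝ) ≤ (((unused k φ).filter fun u => u ∈ G.tgt τ s i).card : ℝ) := by
  have h1 : κ * n + G.m0 ≤ ((G.tgt τ s i).card : ℝ) := by
    unfold tgt; split_ifs <;> exact hN _ _
  have h2 := card_unused_ge k φ (G.tgt τ s i)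
  have h3 : ((G.tgt τ s i).filter fun x => x ∈ unused k φ) =
      ((unused k φ).filter fun u => u ∈ G.tgt τ s i) := by
    ext x; simp [and_comm]
  rw [h3] at h2
  have h4 : ((unused k φ).card : ℝ) ≤ n := by
    exact_mod_cast (Finset.card_le_univ _).trans (by simp)
  have h5 : ((G.tgt τ s i).card : ℝ) ≤
      (((unused k φ).filter fun u => u ∈ G.tgt τ s i).card : ℝ) + k := by exact_mod_cast h2
  have h6 : (k : ℝ) ≤ G.m0 := by exact_mod_cast hk
  nlinarith [mul_le_mul_of_nonneg_left h4 hκ0]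

open Classical in
theorem stage1 (hd : G.DisjSt) (W : Finset (Cell n Δ) → Finset (Fin n × Fin n) → ℝ)
    (hW1 : ∀ Q K, W Q K ≤ 1) (hW0 : G.ZeroProp W) (k0 : ℕ) (q : ℝ) (hq : 0 ≤ q)
    (hrow : RowProp W k0 q) (κ η : ℝ) (hκ0 : 0 < κ) (hκ1 : κ ≤ 1) (hη : 0 < η)
    (hN : ∀ d x, κ * n + G.m0 ≤ ((G.N d x).card : ℝ))
    (hk0 : k0 * (1 + η) ≤ η * (n - G.m0)) :
    ∀ m k, k + m = G.m0 → 0 < k → ∀ φ K Q b, G.Part k K φ → G.Fresh1 k φ Q →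
      PhiP κ G.S G.st G.tgt k φ * (1 + η) ^ m * 2 ^ b ≤ (1/2 : ℝ) ^ k0 →
      W Q K ≤ (1/2 : ℝ) ^ b * (1 + 2 * q) ^ (m + (n - G.m0)) := by
  intro m
  have hmn := G.m0_le
  induction m with
  | zero =>
    intro k hk hkpos φ K Q b hP hQ hΦ
    have hk' : k = G.m0 := by omega
    subst hk'
    rw [zero_add]
    refine G.stage2 hd W hW1 hW0 k0 q hq hrow _ _ (by omega) le_rfl φ K Q G.S b hP (subset_refl _)
      ?_ ?_
    · intro d x v
      have h1 := PhiP_end κ G.S G.st G.tgt hκ0.le hκ1 G.m0 φ (fun s hs i hi => G.st_lt hs hi)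
        (d, x, v)
      have h2 : (G.S.filter fun s => ∀ i ∈ G.st s, φ i ∈ G.tgt (d, x, v) s i).card ≤
          (G.S.filter fun s => G.Good φ d x v s).card := by
        apply Finset.card_le_card
        intro s hs
        rw [Finset.mem_filter] at hs ⊢
        exact ⟨hs.1, G.good_of_tgt hs.1 hs.2⟩
      refine le_trans ?_ h2
      have h3 : (1/2 : ℝ) ^ (G.S.filter fun s => ∀ i ∈ G.st s, φ i ∈ G.tgt (d, x, v) s i).card
          ≤ (1/2 : ℝ) ^ (b + k0) := by
        rw [pow_add]
        have h4 : (1/2 : ℝ) ^ b * 2 ^ b = 1 := by rw [← mul_pow]; norm_num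
        have h5 : (0:ℝ) < (1/2 : ℝ) ^ b := by positivity
        calc _ ≤ _ := h1
          _ = (1/2 : ℝ) ^ b * (PhiP κ G.S G.st G.tgt G.m0 φ * (1 + η) ^ 0 * 2 ^ b) := by
            rw [pow_zero, mul_one, mul_left_comm, h4, mul_one]
          _ ≤ _ := mul_le_mul_of_nonneg_left hΦ h5.le
      have h6 := (pow_le_pow_iff_right_of_lt_one₀ (by norm_num : (0:ℝ) < 1/2) (by norm_num)).1 h3
      have := min_le_right (n - G.m0) k0
      omega
    · intro c hc hf
      obtain ⟨i, h1, h2, h3, h4⟩ := hQ c hc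
      rw [h4] at hf
      simp [lab] at hf
      omega
  | succ m ih =>
    intro k hk hkpos φ K Q b hP hQ hΦ
    have hkn : k < n := by omega
    rcases Nat.eq_zero_or_pos b with hb | hb
    · subst hb
      refine (hW1 Q K).trans ?_
      simpa using one_le_pow₀ (a := 1 + 2 * q) (n := m + 1 + (n - G.m0)) (by linarith)
    obtain ⟨b', rfl⟩ : ∃ b', b = b' + 1 := ⟨b - 1, by omega⟩
    have hne : Nonempty (Bool × Fin n × Fin n) := ⟨(true, ⟨0, by omega⟩, ⟨0, by omega⟩)⟩
    set U := unused k φ with hU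
    set Φ := PhiP κ G.S G.st G.tgt k φ with hΦd
    have hΦpos : 0 < Φ := PhiP_pos κ G.S G.st G.tgt hκ0.le hκ1 k φ
    have hUc : U.card = n - k := card_unused k φ hP.1
    have havg := PhiP_avg κ G.S G.st G.tgt hκ0.le hκ1 hd k φ U
      (fun τ s _ i => G.tgt_card κ hκ0.le hN (by omega) φ τ s i)
    set B := U.filter (fun u => PhiP κ G.S G.st G.tgt (k + 1) (Function.update φ k u) ≤ (1 + η) * Φ)
      with hB
    have hBc : k0 ≤ B.card := by
      have h1 : ((U.filter (fun u => ¬ PhiP κ G.S G.st G.tgt (k + 1) (Function.update φ k u)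
          ≤ (1 + η) * Φ)).card : ℝ) * ((1 + η) * Φ) ≤ U.card * Φ := by
        refine le_trans ?_ havg
        rw [← nsmul_eq_mul]
        refine le_trans ?_ (Finset.sum_le_sum_of_subset_of_nonneg (Finset.filter_subset (fun u => ¬ PhiP κ G.S G.st G.tgt (k + 1) (Function.update φ k u)
          ≤ (1 + η) * Φ) U)
          (fun u _ _ => (PhiP_pos κ G.S G.st G.tgt hκ0.le hκ1 _ _).le))
        apply Finset.card_nsmul_le_sum
        intro u hu
        rw [Finset.mem_filter] at hu
        exact (not_le.1 hu.2).le
      have h2 := Finset.card_filter_add_card_filter_not (s := U)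
        (fun u => PhiP κ G.S G.st G.tgt (k + 1) (Function.update φ k u) ≤ (1 + η) * Φ)
      rw [← hB] at h2
      have h3 : (B.card : ℝ) + ((U.filter (fun u => ¬ PhiP κ G.S G.st G.tgt (k + 1)
        (Function.update φ k u) ≤ (1 + η) * Φ)).card : ℝ) = U.card := by exact_mod_cast h2
      rw [← mul_assoc] at h1
      have h4 := le_of_mul_le_mul_right h1 hΦpos
      have h5 : (U.card : ℝ) = n - k := by rw [hUc, Nat.cast_sub hkn.le]
      have h6 : (k : ℝ) ≤ G.m0 := by exact_mod_cast (by omega : k ≤ G.m0)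
      have h7 : (k0 : ℝ) * (1 + η) ≤ B.card * (1 + η) := by nlinarith
      exact_mod_cast le_of_mul_le_mul_right h7 (by linarith)
    have hpk := G.par_lt k hkpos hkn
    have hup : ∀ u i, i < k → Function.update φ k u i = φ i :=
      fun u i hi => Function.update_of_ne (by omega) _ _
    have hr := hrow Q K (G.rowC k φ B) ((1/2 : ℝ) ^ (b' + 1) * (1 + 2 * q) ^ (m + (n - G.m0)))
        ((1/2 : ℝ) ^ b' * (1 + 2 * q) ^ (m + (n - G.m0))) ?_ ?_ ?_ ?_ (by positivity) (by positivity)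
    · refine hr.trans (le_of_eq ?_)
      rw [show m + 1 + (n - G.m0) = (m + (n - G.m0)) + 1 by omega]
      ring
    · rw [Finset.disjoint_left]
      intro c hc1 hc2
      obtain ⟨u, _, rfl⟩ := Finset.mem_image.1 hc1
      obtain ⟨i, h1, h2, h3, h4⟩ := hQ _ hc2
      simp only [lab, Prod.mk.injEq] at h3 h4
      have hpi := G.par_lt i (by omega) (by omega)
      have h5 := hP.1 (show G.par k < k by omega) (show G.par i < k by omega) h3
      have := G.idx_inj k i (by omega) (by omega) (by omega) (by omega) h5 h4.2.2
      omega
    · rw [card_rowC]; omega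
    · intro c hc1
      obtain ⟨u, hu, rfl⟩ := Finset.mem_image.1 hc1
      rw [hB, Finset.mem_filter] at hu
      refine ih (k + 1) (by omega) (by omega) (Function.update φ k u) _ _ (b' + 1)
          (G.extend_part (by omega) hkn (Finset.subset_insert _ _) hP hu.1
            (Or.inr (Finset.mem_insert_self _ _))) (G.fresh1_step hkpos hkn hQ (hup u) B) ?_
      refine le_trans ?_ hΦ
      have : (0:ℝ) < (1 + η) ^ m * 2 ^ (b' + 1) := by positivity
      have := mul_le_mul_of_nonneg_right hu.2 this.le
      calc _ = _ := mul_assoc _ _ _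
        _ ≤ _ := this
        _ = _ := by ring
    · -- failure: use a neighbour in the dense graph
      have h1 := card_unused_ge k φ (G.N (G.dir k) (φ (G.par k)))
      have h2 := hN (G.dir k) (φ (G.par k))
      have h3 : 0 < ((G.N (G.dir k) (φ (G.par k))).filter fun x => x ∈ unused k φ).card := by
        by_contra h0
        have h4 : (G.N (G.dir k) (φ (G.par k))).card ≤ k := by omega
        have h5 : ((G.N (G.dir k) (φ (G.par k))).card : ℝ) ≤ k := by exact_mod_cast h4
        have h6 : (k : ℝ) ≤ G.m0 := by exact_mod_cast (by omega : k ≤ G.m0)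
        have h7 : (0 : ℝ) < n := by exact_mod_cast (by omega : 0 < n)
        nlinarith [mul_pos hκ0 h7]
      obtain ⟨u, hu⟩ := Finset.card_pos.1 h3
      rw [Finset.mem_filter] at hu
      refine ih (k + 1) (by omega) (by omega) (Function.update φ k u) _ _ b'
          (G.extend_part (by omega) hkn (subset_refl _) hP hu.2
            (Or.inl hu.1)) (G.fresh1_step hkpos hkn hQ (hup u) B) ?_
      refine le_trans ?_ hΦ
      have h4 := PhiP_fail κ G.S G.st G.tgt hκ0.le hκ1 hd k φ u
      have h5 : (0:ℝ) < (1 + η) ^ m * 2 ^ b' := by positivity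
      have h6 := mul_le_mul_of_nonneg_right h4 h5.le
      calc _ = _ := mul_assoc _ _ _
        _ ≤ _ := h6
        _ = Φ * ((1 + η) ^ m * 2 ^ (b' + 1)) := by ring
        _ ≤ Φ * ((1 + η) ^ m * 2 ^ (b' + 1)) * (1 + η) := le_mul_of_one_le_right (by positivity) (by linarith)
        _ = _ := by ring

/-- conclusion from the initial state -/
theorem stage0 (hn : 0 < n) (hd : G.DisjSt) (W : Finset (Cell n Δ) → Finset (Fin n × Fin n) → ℝ)
    (hW1 : ∀ Q K, W Q K ≤ 1) (hW0 : G.ZeroProp W) (k0 : ℕ) (q : ℝ) (hq : 0 ≤ q)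
    (hrow : RowProp W k0 q) (κ η : ℝ) (hκ0 : 0 < κ) (hκ1 : κ ≤ 1) (hη : 0 < η)
    (hN : ∀ d x, κ * n + G.m0 ≤ ((G.N d x).card : ℝ))
    (hk0 : k0 * (1 + η) ≤ η * (n - G.m0)) (D : ℕ) (hD : ∀ s ∈ G.S, (G.st s).card ≤ D) (b : ℕ)
    (hnum : 2 * (n : ℝ) ^ 2 * (1 - κ ^ D / 2) ^ G.S.card * (1 + η) ^ n * 2 ^ b ≤ (1/2 : ℝ) ^ k0) :
    W ∅ ∅ ≤ (1/2 : ℝ) ^ b * (1 + 2 * q) ^ n := by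
  have hm := G.m0_pos
  have hmn := G.m0_le
  have hneT : Nonempty (Bool × Fin n × Fin n) := ⟨(true, ⟨0, hn⟩, ⟨0, hn⟩)⟩
  set φ : ℕ → Fin n := fun _ => ⟨0, hn⟩ with hφ
  set U := unused 0 φ with hU
  have hUc : U.card = n := by
    have := card_unused 0 φ (by intro i hi; simp at hi)
    simpa using this
  have havg := PhiP_avg κ G.S G.st G.tgt hκ0.le hκ1 hd 0 φ U
      (fun τ s _ i => G.tgt_card κ hκ0.le hN (by omega) φ τ s i)
  have hne : U.Nonempty := Finset.card_pos.1 (by omega)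
  obtain ⟨u, hu, hle⟩ := Finset.exists_le_of_sum_le hne
    (f := fun u => PhiP κ G.S G.st G.tgt (0 + 1) (Function.update φ 0 u))
    (g := fun _ => PhiP κ G.S G.st G.tgt 0 φ) (by simpa using havg)
  have h0 := PhiP_zero κ G.S G.st G.tgt hκ0.le hκ1 D hD φ
  have hcard : (Fintype.card (Bool × Fin n × Fin n) : ℝ) = 2 * (n : ℝ) ^ 2 := by
    simp; ring
  rw [hcard] at h0
  have hP : G.Part 1 ∅ (Function.update φ 0 u) := by
    refine ⟨?_, fun i h1 h2 => by omega⟩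
    intro i hi j hj _
    simp only [Set.mem_Iio] at hi hj
    omega
  have := G.stage1 hd W hW1 hW0 k0 q hq hrow κ η hκ0 hκ1 hη hN hk0 (G.m0 - 1) 1 (by omega)
    (by omega) _ ∅ ∅ b hP (by intro c hc; simp at hc) ?_
  · refine this.trans ?_
    apply mul_le_mul_of_nonneg_left _ (by positivity)
    exact pow_le_pow_right₀ (by linarith) (by omega)
  · refine le_trans ?_ hnum
    gcongr
    · exact (PhiP_pos κ G.S G.st G.tgt hκ0.le hκ1 0 φ).le.trans h0
    · exact hle.trans h0
    · linarith
    · omega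

end TreeData
end PartD


section PartF

lemma bfs_order {n : ℕ} (G : SimpleGraph (Fin n)) (hG : G.Connected) (hn : 0 < n) :
    ∀ k, k + 1 ≤ n → ∃ (f : ℕ → Fin n) (par : ℕ → ℕ), Set.InjOn f (Set.Iio (k + 1)) ∧
      (∀ i, 0 < i → i < k + 1 → par i < i ∧ G.Adj (f (par i)) (f i)) ∧
      (∀ i j, 0 < i → i ≤ j → j < k + 1 → par i ≤ par j) ∧
      (∀ i, 0 < i → i < k + 1 → ∀ a, a < par i → ∀ y, G.Adj (f a) y → ∃ j, j < k + 1 ∧ f j = y) := by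
  classical
  intro k
  induction k with
  | zero =>
    intro _
    refine ⟨fun _ => ⟨0, hn⟩, fun _ => 0, ?_, ?_, ?_, ?_⟩
    · intro i hi j hj _
      simp only [Set.mem_Iio] at hi hj
      omega
    all_goals intros; omega
  | succ k ih =>
    intro hk
    obtain ⟨f, par, hinj, hpar, hmono, hcl⟩ := ih (by omega)
    have hex : ∃ a, a < k + 1 ∧ ∃ y, G.Adj (f a) y ∧ ∀ j, j < k + 1 → f j ≠ y := by
      by_contra hcon
      push Not at hcon
      have hall : ∀ y : Fin n, ∃ j, j < k + 1 ∧ f j = y := by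
        intro y
        obtain ⟨w⟩ := hG.preconnected (f 0) y
        have : ∀ x y (w : G.Walk x y), (∃ j, j < k + 1 ∧ f j = x) → ∃ j, j < k + 1 ∧ f j = y := by
          intro x y w
          induction w with
          | nil => exact id
          | cons h _ ih =>
            rintro ⟨j, hj, rfl⟩
            exact ih (hcon j hj _ h)
        exact this _ _ w ⟨0, by omega, rfl⟩
      have h1 : (Finset.univ : Finset (Fin n)) ⊆ (Finset.range (k + 1)).image f := by
        intro y _
        obtain ⟨j, hj, rfl⟩ := hall y
        exact Finset.mem_image_of_mem _ (Finset.mem_range.2 hj)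
      have h2 := (Finset.card_le_card h1).trans Finset.card_image_le
      simp at h2
      omega
    set a := Nat.find hex with ha
    obtain ⟨ha1, y, hay, hy⟩ := Nat.find_spec hex
    rw [← ha] at ha1 hay
    have hmin : ∀ a', a' < a → ∀ z, G.Adj (f a') z → ∃ j, j < k + 1 ∧ f j = z := by
      intro a' ha' z hz
      by_contra hcon
      push Not at hcon
      exact Nat.find_min hex ha' ⟨by omega, z, hz, hcon⟩
    have hu : ∀ i, i < k + 1 → Function.update f (k + 1) y i = f i := fun i hi =>
      Function.update_of_ne (by omega) _ _
    have hp : ∀ i, i < k + 1 → Function.update par (k + 1) a i = par i := fun i hi =>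
      Function.update_of_ne (by omega) _ _
    have hus : Function.update f (k + 1) y (k + 1) = y := Function.update_self _ _ _
    have hps : Function.update par (k + 1) a (k + 1) = a := Function.update_self _ _ _
    have hcl' : ∀ a', a' < a → ∀ z, G.Adj (Function.update f (k + 1) y a') z →
        ∃ j, j < k + 1 + 1 ∧ Function.update f (k + 1) y j = z := by
      intro a' ha' z hz
      rw [hu a' (by omega)] at hz
      obtain ⟨j, hj, hjz⟩ := hmin a' ha' z hz
      exact ⟨j, by omega, by rw [hu j hj, hjz]⟩
    have hle : ∀ i, 0 < i → i < k + 1 → par i ≤ a := by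
      intro i hi hik
      by_contra hlt
      push Not at hlt
      obtain ⟨j, hj, hjy⟩ := hcl i hi hik a hlt y hay
      exact hy j hj hjy
    refine ⟨Function.update f (k + 1) y, Function.update par (k + 1) a, ?_, ?_, ?_, ?_⟩
    · intro i hi j hj hij
      simp only [Set.mem_Iio] at hi hj
      rcases Nat.lt_or_ge i (k + 1) with h1 | h1 <;> rcases Nat.lt_or_ge j (k + 1) with h2 | h2
      · rw [hu i h1, hu j h2] at hij
        exact hinj h1 h2 hij
      · have : j = k + 1 := by omega
        subst this
        rw [hu i h1, hus] at hij
        exact absurd hij (hy i h1)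
      · have : i = k + 1 := by omega
        subst this
        rw [hu j h2, hus] at hij
        exact absurd hij.symm (hy j h2)
      · omega
    · intro i hi hik
      rcases Nat.lt_or_ge i (k + 1) with h1 | h1
      · have := hpar i hi h1
        rw [hp i h1, hu i h1, hu _ (by omega)]
        exact this
      · have : i = k + 1 := by omega
        subst this
        rw [hps, hus, hu a ha1]
        exact ⟨ha1, hay⟩
    · intro i j hi hij hj
      rcases Nat.lt_or_ge j (k + 1) with h1 | h1
      · rw [hp i (by omega), hp j h1]
        exact hmono i j hi hij h1
      · have : j = k + 1 := by omega
        subst this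
        rw [hps]
        rcases Nat.lt_or_ge i (k + 1) with h2 | h2
        · rw [hp i h2]; exact hle i hi h2
        · have : i = k + 1 := by omega
          subst this
          rw [hps]
    · intro i hi hik a' ha' z hz
      refine hcl' a' ?_ z hz
      rcases Nat.lt_or_ge i (k + 1) with h1 | h1
      · rw [hp i h1] at ha'
        exact lt_of_lt_of_le ha' (hle i hi h1)
      · have : i = k + 1 := by omega
        subst this
        rwa [hps] at ha'

lemma tree_edges {n : ℕ} (G : SimpleGraph (Fin n)) (hG : G.IsTree) (hn : 0 < n)
    (f : ℕ → Fin n) (par : ℕ → ℕ) (hinj : Set.InjOn f (Set.Iio n))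
    (hpar : ∀ i, 0 < i → i < n → par i < i ∧ G.Adj (f (par i)) (f i)) :
    ∀ i j, i < n → j < n → G.Adj (f i) (f j) → (0 < j ∧ i = par j) ∨ (0 < i ∧ j = par i) := by
  classical
  have hinj' : Set.InjOn (fun i => s(f (par i), f i)) (Finset.Ioo 0 n : Finset ℕ) := by
    intro i hi j hj hij
    simp only [Finset.coe_Ioo, Set.mem_Ioo] at hi hj
    have h1 := hpar i hi.1 hi.2
    have h2 := hpar j hj.1 hj.2
    simp only [Sym2.eq_iff] at hij
    rcases hij with ⟨_, h⟩ | ⟨h3, h4⟩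
    · exact hinj hi.2 hj.2 h
    · have h5 := hinj (show par i < n by omega) hj.2 h3
      have h6 := hinj hi.2 (show par j < n by omega) h4
      omega
  have hsub : (Finset.Ioo 0 n).image (fun i => s(f (par i), f i)) ⊆ G.edgeFinset := by
    intro e he
    obtain ⟨i, hi, rfl⟩ := Finset.mem_image.1 he
    rw [Finset.mem_Ioo] at hi
    simpa using (hpar i hi.1 hi.2).2
  have hcard := hG.card_edgeFinset
  have heq := Finset.eq_of_subset_of_card_le hsub (by
    rw [Finset.card_image_of_injOn hinj']
    simp at hcard ⊢
    omega)
  intro i j hi hj hadj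
  have hm : s(f i, f j) ∈ G.edgeFinset := by simpa using hadj
  rw [← heq] at hm
  obtain ⟨l, hl, hle⟩ := Finset.mem_image.1 hm
  rw [Finset.mem_Ioo] at hl
  have h1 := hpar l hl.1 hl.2
  simp only [Sym2.eq_iff] at hle
  rcases hle with ⟨h3, h4⟩ | ⟨h3, h4⟩
  · have h5 := hinj (show par l < n by omega) hi h3
    have h6 := hinj hl.2 hj h4
    left; subst h6; exact ⟨hl.1, h5.symm⟩
  · have h5 := hinj (show par l < n by omega) hj h3
    have h6 := hinj hl.2 hi h4
    right; subst h6; exact ⟨hl.1, h5.symm⟩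

def chF (n : ℕ) (par : ℕ → ℕ) (s : ℕ) : Finset ℕ :=
  (Finset.range n).filter fun i => 0 < i ∧ par i = s

def stF (n : ℕ) (par : ℕ → ℕ) (s : ℕ) : Finset ℕ := insert s (insert (par s) (chF n par s))

lemma card_stF (n Δ : ℕ) (par : ℕ → ℕ) (hch : ∀ s, (chF n par s).card ≤ Δ) (s : ℕ) :
    (stF n par s).card ≤ Δ + 2 := by
  unfold stF
  have h1 := Finset.card_insert_le s (insert (par s) (chF n par s))
  have h2 := Finset.card_insert_le (par s) (chF n par s)
  have := hch s
  omega

lemma exists_S (n Δ m0 : ℕ) (par : ℕ → ℕ) (hpar : ∀ i, 0 < i → i < n → par i < i)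
    (hmono : ∀ i j, 0 < i → i ≤ j → j < n → par i ≤ par j)
    (hch : ∀ s, (chF n par s).card ≤ Δ) (hm0 : 0 < m0) (hmn : m0 < n) :
    ∃ S : Finset ℕ, (∀ s ∈ S, 0 < s) ∧ (∀ s ∈ S, s < m0) ∧
      (∀ s ∈ S, ∀ i, 0 < i → i < n → par i = s → i < m0) ∧
      (∀ s ∈ S, ∀ s' ∈ S, s ≠ s' → Disjoint (stF n par s) (stF n par s')) ∧
      m0 ≤ Δ * (S.card * (Δ + 2) ^ 2 + 2) := by
  classical
  set cands := Finset.Ioo 0 (par m0) with hc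
  have hpm := hpar m0 hm0 hmn
  set P : Finset ℕ → Prop := fun S => ∀ s ∈ S, ∀ s' ∈ S, s ≠ s' →
    Disjoint (stF n par s) (stF n par s') with hP
  obtain ⟨S, hS, hmax⟩ := Finset.exists_max_image (cands.powerset.filter P) Finset.card
    ⟨∅, by simp [hP]⟩
  rw [Finset.mem_filter, Finset.mem_powerset] at hS
  obtain ⟨hSc, hSP⟩ := hS
  have hmem : ∀ s ∈ S, 0 < s ∧ s < par m0 := fun s hs => Finset.mem_Ioo.1 (hSc hs)
  refine ⟨S, fun s hs => (hmem s hs).1, fun s hs => by have := hmem s hs; omega, ?_, hSP, ?_⟩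
  · intro s hs i hi hin hpi
    by_contra hlt
    have h1 := hmono m0 i hm0 (by omega) hin
    have := hmem s hs
    omega
  · have hcov : cands ⊆ S.biUnion fun s' => (stF n par s').biUnion fun i => stF n par i := by
      intro s hs
      have hex : ∃ s' ∈ S, ¬ Disjoint (stF n par s) (stF n par s') := by
        by_contra hcon
        push Not at hcon
        have hsS : s ∉ S := fun h => by
          have := hcon s h
          rw [disjoint_self] at this
          have h1 : s ∈ stF n par s := by simp [stF]
          rw [this] at h1
          simp at h1
        have h1 : insert s S ∈ cands.powerset.filter P := by
          rw [Finset.mem_filter, Finset.mem_powerset]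
          refine ⟨Finset.insert_subset hs hSc, ?_⟩
          intro x hx y hy hxy
          rw [Finset.mem_insert] at hx hy
          rcases hx with rfl | hx <;> rcases hy with rfl | hy
          · exact absurd rfl hxy
          · exact hcon y hy
          · exact (hcon x hx).symm
          · exact hSP x hx y hy hxy
        have h2 := hmax _ h1
        rw [Finset.card_insert_of_notMem hsS] at h2
        omega
      obtain ⟨s', hs', hnd⟩ := hex
      rw [Finset.not_disjoint_iff] at hnd
      obtain ⟨i, hi1, hi2⟩ := hnd
      rw [Finset.mem_Ioo] at hs
      refine Finset.mem_biUnion.2 ⟨s', hs', Finset.mem_biUnion.2 ⟨i, hi2, ?_⟩⟩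
      simp only [stF, chF, Finset.mem_insert, Finset.mem_filter, Finset.mem_range] at hi1 ⊢
      rcases hi1 with h | h | h
      · exact Or.inl h.symm
      · exact Or.inr (Or.inr ⟨by omega, hs.1, h.symm⟩)
      · exact Or.inr (Or.inl h.2.2.symm)
    have h1 : cands.card ≤ S.card * ((Δ + 2) * (Δ + 2)) := by
      refine (Finset.card_le_card hcov).trans (Finset.card_biUnion_le_card_mul _ _ _ ?_)
      intro s' _
      refine (Finset.card_biUnion_le_card_mul _ _ (Δ + 2) ?_).trans ?_
      · intro i _
        exact card_stF n Δ par hch i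
      · exact Nat.mul_le_mul_right _ (card_stF n Δ par hch s')
    have h2 : Finset.Ioc 0 m0 ⊆ (Finset.range (par m0 + 1)).biUnion (chF n par) := by
      intro i hi
      rw [Finset.mem_Ioc] at hi
      refine Finset.mem_biUnion.2 ⟨par i, ?_, ?_⟩
      · rw [Finset.mem_range]
        have := hmono i m0 hi.1 hi.2 hmn
        omega
      · simp only [chF, Finset.mem_filter, Finset.mem_range]
        exact ⟨by omega, hi.1, trivial⟩
    have h3 := (Finset.card_le_card h2).trans
      (Finset.card_biUnion_le_card_mul _ _ Δ (fun s _ => hch s))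
    simp only [Nat.card_Ioc, Finset.card_range, tsub_zero] at h3
    have h4 : cands.card = par m0 - 0 - 1 := by rw [hc, Nat.card_Ioo]
    have h5 : par m0 + 1 ≤ S.card * (Δ + 2) ^ 2 + 2 := by
      rw [pow_two]; omega
    calc m0 ≤ _ := h3
      _ ≤ (S.card * (Δ + 2) ^ 2 + 2) * Δ := Nat.mul_le_mul_right _ h5
      _ = _ := Nat.mul_comm _ _

lemma exists_idx (n Δ : ℕ) (par : ℕ → ℕ) (hch : ∀ s, (chF n par s).card ≤ Δ) :
    ∃ idx : ℕ → Fin (Δ + 1), ∀ i j, 0 < i → i < n → 0 < j → j < n → par i = par j →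
      idx i = idx j → i = j := by
  classical
  have hlt : ∀ i, ((chF n par (par i)).filter fun j => j < i).card < Δ + 1 := fun i =>
    lt_of_le_of_lt ((Finset.card_filter_le _ _).trans (hch _)) (Nat.lt_succ_self _)
  refine ⟨fun i => ⟨_, hlt i⟩, ?_⟩
  have key : ∀ i j, 0 < i → i < n → 0 < j → j < n → par i = par j → i < j →
      ((chF n par (par i)).filter fun l => l < i).card <
      ((chF n par (par j)).filter fun l => l < j).card := by
    intro i j hi hin hj hjn hp hij
    apply Finset.card_lt_card
    rw [Finset.ssubset_iff_of_subset]
    · refine ⟨i, ?_, ?_⟩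
      · simp [chF, hi, hin, hp, hij]
      · simp
    · intro l hl
      rw [Finset.mem_filter] at hl ⊢
      exact ⟨hp ▸ hl.1, by omega⟩
  intro i j hi hin hj hjn hp he
  rw [Fin.mk.injEq] at he
  rcases Nat.lt_trichotomy i j with h | h | h
  · have := key i j hi hin hj hjn hp h; omega
  · exact h
  · have := key j i hj hjn hi hin hp.symm h; omega

end PartF


section PartG

lemma card_fiber {n Δ : ℕ} (e : Fin n × Fin n) :
    (Finset.univ.filter fun q : Cell n Δ => piC q = e).card = 4 * (Δ + 1) := by
  classical
  have h : (Finset.univ.filter fun q : Cell n Δ => piC q = e) =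
      Finset.univ.image (fun l : Bool × Bool × Fin (Δ + 1) =>
        ((if l.1 then e.1 else e.2, l, if l.1 then e.2 else e.1) : Cell n Δ)) := by
    ext ⟨x, ⟨d, l⟩, u⟩
    obtain ⟨e1, e2⟩ := e
    rw [Finset.mem_filter, Finset.mem_image]
    simp only [Finset.mem_univ, true_and, piC, piE]
    constructor
    · intro h
      refine ⟨(d, l), ?_⟩
      cases d <;> simp_all
    · rintro ⟨⟨d', l'⟩, h⟩
      simp only [Prod.mk.injEq] at h
      obtain ⟨h1, ⟨h2, h3⟩, h4⟩ := h
      subst h2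
      cases d' <;> simp_all
  rw [h, Finset.card_image_of_injective]
  · simp [Fintype.card_prod]; ring
  · intro l l' h
    simp only [Prod.mk.injEq] at h
    exact h.2.1

lemma card_children {n Δ : ℕ} (T : Fin n → Fin n → Prop)
    (hΔ : ∀ v : Fin n, {u | T v u}.ncard + {u | T u v}.ncard ≤ Δ)
    (f : ℕ → Fin n) (par : ℕ → ℕ) (hinj : Set.InjOn f (Set.Iio n))
    (hpar : ∀ i, 0 < i → i < n → par i < i ∧ (SimpleGraph.fromRel T).Adj (f (par i)) (f i)) (s : ℕ) :
    (chF n par s).card ≤ Δ := by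
  classical
  rw [← Finset.card_image_of_injOn (s := chF n par s) (f := f)]
  · refine le_trans ?_ (hΔ (f s))
    refine le_trans ?_ (Set.ncard_union_le _ _)
    rw [← Set.ncard_coe_finset]
    apply Set.ncard_le_ncard _ (Set.toFinite _)
    intro y hy
    simp only [chF, Finset.coe_image, Finset.coe_filter, Finset.mem_range, Set.mem_image,
      Set.mem_ofPred_eq] at hy
    obtain ⟨i, ⟨hi, hi0, hp⟩, rfl⟩ := hy
    have := (hpar i hi0 hi).2
    rw [hp, SimpleGraph.fromRel_adj] at this
    exact this.2
  · intro i hi j hj hij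
    simp only [chF, Finset.coe_filter, Finset.mem_range, Set.mem_ofPred_eq] at hi hj
    exact hinj hi.1 hj.1 hij

open Classical in
theorem assembly (α : ℝ) (n Δ : ℕ) (hn : 0 < n) (c : ℝ) (hc : 0 < c) (hcn : c / n ≤ 1)
    (Dα : Fin n → Fin n → Prop)
    (hD : ∀ v : Fin n, α * n ≤ ({x | Dα v x}.ncard : ℝ) ∧ α * n ≤ ({x | Dα x v}.ncard : ℝ))
    (T : Fin n → Fin n → Prop) (hT : ∀ a b, T a b → ¬ T b a)
    (hTr : (SimpleGraph.fromRel T).IsTree)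
    (hΔ : ∀ v : Fin n, {u | T v u}.ncard + {u | T u v}.ncard ≤ Δ)
    (m0 : ℕ) (hm0 : 0 < m0) (hmn : m0 < n) (κ η : ℝ) (hκ0 : 0 < κ) (hκ1 : κ ≤ 1) (hη : 0 < η)
    (hN : κ * n + m0 ≤ α * n) (k0 b : ℕ) (hk0 : k0 * (1 + η) ≤ η * (n - m0))
    (hnum : ∀ σ : ℕ, m0 ≤ Δ * (σ * (Δ + 2) ^ 2 + 2) →
      2 * (n : ℝ) ^ 2 * (1 - κ ^ (Δ + 2) / 2) ^ σ * (1 + η) ^ n * 2 ^ b ≤ (1/2 : ℝ) ^ k0)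
    (ε : ℝ) (hε : (1/2 : ℝ) ^ b * (1 + 2 * (1 - c / n / (4 * (Δ + 1))) ^ k0) ^ n ≤ ε) :
    1 - ENNReal.ofReal ε ≤
      (Measure.pi fun _ : Fin n × Fin n =>
          (ENNReal.ofReal (c / n)) • Measure.dirac true +
          (ENNReal.ofReal (1 - c / n)) • Measure.dirac false)
        {ω | ∃ φ : Fin n → Fin n, Function.Injective φ ∧
          ∀ a b, T a b → (Dα (φ a) (φ b) ∨ ω (φ a, φ b) = true)} := by
  have hnR : (0:ℝ) < n := by exact_mod_cast hn
  obtain ⟨f, par, hinj, hpar, hmono, -⟩ := bfs_order (SimpleGraph.fromRel T) hTr.1 hn (n - 1) (by omega)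
  rw [show n - 1 + 1 = n by omega] at hinj hpar hmono
  have hch := card_children T hΔ f par hinj hpar
  obtain ⟨S, hS1, hS2, hS3, hS4, hS5⟩ := exists_S n Δ m0 par (fun i h h' => (hpar i h h').1) hmono hch hm0 hmn
  obtain ⟨idx, hidx⟩ := exists_idx n Δ par hch
  have hedge := tree_edges _ hTr hn f par hinj hpar
  let G : TreeData n Δ :=
    { N := fun d x => Finset.univ.filter fun y => if d then Dα x y else Dα y x
      N_symm := by
        intro d x y
        cases d <;> simp
      par := par
      dir := fun i => decide (T (f (par i)) (f i))
      idx := idx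
      par_lt := fun i h h' => (hpar i h h').1
      idx_inj := hidx
      m0 := m0
      m0_le := hmn.le
      m0_pos := hm0
      S := S
      S_pos := hS1
      S_lt := hS2
      S_ch := hS3 }
  set A : Set (Fin n × Fin n → Bool) := {ω | ∃ φ : Fin n → Fin n, Function.Injective φ ∧
          ∀ a b, T a b → (Dα (φ a) (φ b) ∨ ω (φ a, φ b) = true)} with hA
  apply measure_bound _ (by positivity) hcn
  refine le_trans ?_ hε
  set F : Finset (Fin n × Fin n) → ℝ :=
    fun T' => if (fun e => decide (e ∈ T')) ∈ A then (0:ℝ) else 1 with hF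
  have hF1 : ∀ T', F T' ≤ 1 := by
    intro T'; simp only [hF]; split_ifs <;> norm_num
  have hFa : Antitone F := by
    intro T1 T2 h12
    simp only [hF]
    by_cases h1 : (fun e => decide (e ∈ T1)) ∈ A
    · have h2 : (fun e => decide (e ∈ T2)) ∈ A := by
        obtain ⟨φ, hφ, h⟩ := h1
        refine ⟨φ, hφ, fun a b hab => (h a b hab).imp id ?_⟩
        simp only [decide_eq_true_eq]
        exact fun h => h12 h
      rw [if_pos h1, if_pos h2]
    · rw [if_neg h1]; split_ifs <;> norm_num
  set p1 : ℝ := c / n / (4 * (Δ + 1)) with hp1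
  have hp0 : 0 ≤ p1 := by positivity
  have hfib : ∀ e : Fin n × Fin n,
      p1 * ((Finset.univ.filter fun q : Cell n Δ => piC q = e).card : ℝ) = c / n := by
    intro e
    rw [card_fiber, hp1]
    push_cast
    field_simp
  have hfib1 : ∀ e : Fin n × Fin n,
      p1 * ((Finset.univ.filter fun q : Cell n Δ => piC q = e).card : ℝ) ≤ 1 := by
    intro e; rw [hfib]; exact hcn
  have hp11 : p1 ≤ 1 := by
    rw [hp1]
    apply (div_le_self (by positivity) _).trans hcn
    have : (0:ℝ) ≤ Δ := by positivity
    linarith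
  set W : Finset (Cell n Δ) → Finset (Fin n × Fin n) → ℝ := lossW F piC p1 with hW
  have hW1 : ∀ Q K, W Q K ≤ 1 := fun Q K =>
    lossX_le_one F hF1 _ (remP_nonneg _ _ hp0 _) (remP_le_one _ _ hp0 hfib1 _) K
  have hq : 0 ≤ (1 - p1) ^ k0 := pow_nonneg (by linarith) _
  have hrow : TreeData.RowProp W k0 ((1 - p1) ^ k0) := by
    intro Q K C a b hd hk hC hb ha hb0
    refine (lossW_row F hFa piC p1 hp0 hp11 hfib1 C K a b Q hd hC hb ha).trans ?_
    have := pow_le_pow_of_le_one (by linarith : 0 ≤ 1 - p1) (by linarith) hk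
    nlinarith [mul_le_mul_of_nonneg_right this hb0]
  have hsurj : ∀ v : Fin n, ∃ i, i < n ∧ f i = v := by
    have h1 : Function.Injective (fun i : Fin n => f i) := by
      intro i j hij
      exact Fin.ext (hinj i.2 j.2 hij)
    intro v
    obtain ⟨i, hi⟩ := (Finite.surjective_of_injective h1) v
    exact ⟨i, i.2, hi⟩
  choose g hg1 hg2 using hsurj
  have hW0 : G.ZeroProp W := by
    intro Q K φ hφ
    apply lossX_eq_zero
    intro T' hKT
    have hmem : (fun e => decide (e ∈ T')) ∈ A := by
      refine ⟨fun v => φ (g v), ?_, ?_⟩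
      · intro v w h
        have := hφ.1 (hg1 v) (hg1 w) h
        rw [← hg2 v, ← hg2 w, this]
      · intro a b' hab
        have hadj : (SimpleGraph.fromRel T).Adj (f (g a)) (f (g b')) := by
          rw [hg2, hg2, SimpleGraph.fromRel_adj]
          refine ⟨?_, Or.inl hab⟩
          rintro rfl
          exact hT _ _ hab hab
        rcases hedge _ _ (hg1 a) (hg1 b') hadj with ⟨h0, h⟩ | ⟨h0, h⟩
        · have hd : G.dir (g b') = true := by
            show decide (T (f (par (g b'))) (f (g b'))) = true
            rw [← h, hg2, hg2]
            simpa using hab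
          have h' : G.par (g b') = g a := h.symm
          have := hφ.2 _ h0 (hg1 b')
          unfold TreeData.EdgeOK at this
          rw [hd, h'] at this
          refine this.imp ?_ ?_
          · intro h; simpa [G] using h
          · intro h; simpa [piE] using hKT h
        · have hd : G.dir (g a) = false := by
            show decide (T (f (par (g a))) (f (g a))) = false
            rw [← h, hg2, hg2]
            simpa using hT _ _ hab
          have h' : G.par (g a) = g b' := h.symm
          have := hφ.2 _ h0 (hg1 a)
          unfold TreeData.EdgeOK at this
          rw [hd, h'] at this
          refine this.imp ?_ ?_
          · intro h; simpa [G] using h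
          · intro h; simpa [piE] using hKT h
    simp only [hF]
    rw [if_pos hmem]
  have hNc : ∀ d x, κ * n + G.m0 ≤ ((G.N d x).card : ℝ) := by
    intro d x
    refine hN.trans ?_
    have h1 := hD x
    cases d
    · have : (G.N false x).card = {y | Dα y x}.ncard := by
        rw [← Set.ncard_coe_finset]; simp [G]
      rw [this]; exact h1.2
    · have : (G.N true x).card = {y | Dα x y}.ncard := by
        rw [← Set.ncard_coe_finset]; simp [G]
      rw [this]; exact h1.1
  have key := G.stage0 hn hS4 W hW1 hW0 k0 _ hq hrow κ η hκ0 hκ1 hη hNc hk0 (Δ + 2)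
    (fun s _ => card_stF n Δ par hch s) b (hnum S.card hS5)
  have hW00 : W ∅ ∅ = lossX F (fun _ => c / n) ∅ := by
    simp only [hW, lossW]
    congr 1
    funext e
    simp only [remP]
    rw [← hfib e]
    simp
  rw [hW00] at key
  refine le_trans (le_of_eq ?_) key
  simp only [hF]
  congr!

end PartG

section PartH

lemma exp_neg_le_inv {y : ℝ} (hy : 0 < y) : Real.exp (-y) ≤ 1 / y := by
  rw [Real.exp_neg, ← one_div]
  apply one_div_le_one_div_of_le hy
  linarith [Real.add_one_le_exp y]

lemma half_pow_le (b : ℕ) : (1/2 : ℝ) ^ b ≤ Real.exp (-(b / 2)) := by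
  have h : (1/2 : ℝ) ≤ Real.exp (-(1/2)) := by
    have := Real.add_one_le_exp (-(1/2) : ℝ)
    linarith
  calc (1/2 : ℝ) ^ b ≤ (Real.exp (-(1/2))) ^ b := pow_le_pow_left₀ (by norm_num) h b
    _ = _ := by rw [← Real.exp_nat_mul]; congr 1; ring

lemma two_pow_le (b : ℕ) : (2 : ℝ) ^ b ≤ Real.exp b := by
  have h : (2 : ℝ) ≤ Real.exp 1 := by
    have := Real.add_one_le_exp (1 : ℝ)
    linarith
  calc (2 : ℝ) ^ b ≤ (Real.exp 1) ^ b := pow_le_pow_left₀ (by norm_num) h b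
    _ = _ := by rw [← Real.exp_nat_mul]; simp

lemma one_add_pow_le (x : ℝ) (hx : 0 ≤ 1 + x) (b : ℕ) : (1 + x) ^ b ≤ Real.exp (b * x) := by
  have h : 1 + x ≤ Real.exp x := by
    have := Real.add_one_le_exp x
    linarith
  calc (1 + x) ^ b ≤ (Real.exp x) ^ b := pow_le_pow_left₀ hx h b
    _ = _ := by rw [← Real.exp_nat_mul]

lemma num_one (lam kD : ℝ) (hl : 0 < lam) (hk1 : kD ≤ 1) (n σ b k0 : ℕ)
    (hσ : lam * n ≤ kD / 2 * σ) (hb : (b : ℝ) ≤ lam * n / 16) (hk : (k0 : ℝ) ≤ lam * n / 64)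
    (hn : 96 / lam ^ 3 ≤ n) :
    2 * (n : ℝ) ^ 2 * (1 - kD / 2) ^ σ * (1 + lam / 8) ^ n * 2 ^ b ≤ (1/2 : ℝ) ^ k0 := by
  have h1 : (1 - kD / 2) ^ σ ≤ Real.exp (-(lam * n)) := by
    have := one_add_pow_le (-(kD / 2)) (by linarith) σ
    rw [← sub_eq_add_neg] at this
    refine this.trans (Real.exp_le_exp.2 ?_)
    linarith
  have h2 := one_add_pow_le (lam / 8) (by linarith) n
  have h3 : (2:ℝ) ^ b ≤ Real.exp (lam * n / 16) := (two_pow_le b).trans (Real.exp_le_exp.2 hb)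
  have h4 : (2:ℝ) ^ k0 ≤ Real.exp (lam * n / 64) := (two_pow_le k0).trans (Real.exp_le_exp.2 hk)
  have h5 : 2 * (n:ℝ) ^ 2 ≤ Real.exp (lam * n / 2) := by
    have := Real.pow_div_factorial_le_exp (lam * n / 2) (by positivity) 3
    refine le_trans ?_ this
    rw [div_le_iff₀ (by positivity)] at hn
    have h6 : (3:ℕ).factorial = 6 := rfl
    rw [h6]
    push_cast
    have h7 : 96 * (n:ℝ) ^ 2 ≤ n * lam ^ 3 * n ^ 2 := mul_le_mul_of_nonneg_right hn (by positivity)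
    nlinarith
  have h0 : (0:ℝ) ≤ 1 - kD / 2 := by linarith
  rw [one_div, inv_pow, ← one_div, le_div_iff₀ (by positivity)]
  calc 2 * (n : ℝ) ^ 2 * (1 - kD / 2) ^ σ * (1 + lam / 8) ^ n * 2 ^ b * 2 ^ k0
      ≤ Real.exp (lam * n / 2) * Real.exp (-(lam * n)) * Real.exp (n * (lam / 8)) *
        Real.exp (lam * n / 16) * Real.exp (lam * n / 64) := by gcongr
    _ = Real.exp (-(lam * n) * (19 / 64)) := by
        rw [← Real.exp_add, ← Real.exp_add, ← Real.exp_add, ← Real.exp_add]; congr 1; ring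
    _ ≤ 1 := by
        rw [Real.exp_le_one_iff]
        have : 0 ≤ lam * n := by positivity
        linarith

lemma num_two (lam K c ε : ℝ) (hl : 0 < lam) (hK : 0 < K) (hε : 0 < ε)
    (hc : c = 128 ^ 2 * K / lam ^ 2) (n b k0 : ℕ) (hn0 : 0 < n)
    (hb : lam * n / 16 - 1 ≤ (b : ℝ)) (hk : lam * n / 64 - 1 ≤ (k0 : ℝ))
    (hn : 128 / lam ≤ n) (hp : c / n / K ≤ 1) (hn2 : 128 / (lam * ε) ≤ n) :
    (1/2 : ℝ) ^ b * (1 + 2 * (1 - c / n / K) ^ k0) ^ n ≤ ε := by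
  have hnR : (0:ℝ) < n := by exact_mod_cast hn0
  have hq0 : 0 ≤ (1 - c / n / K) ^ k0 := pow_nonneg (by linarith) _
  have hcpos : 0 < c := by rw [hc]; positivity
  rw [div_le_iff₀ hl] at hn
  rw [div_le_iff₀ (by positivity)] at hn2
  have hq : (1 - c / n / K) ^ k0 ≤ lam / 128 := by
    have h := one_add_pow_le (-(c / n / K)) (by linarith) k0
    rw [← sub_eq_add_neg] at h
    refine h.trans ?_
    have h2 : 128 / lam ≤ k0 * (c / n / K) := by
      have h3 : lam * n / 128 ≤ k0 := by linarith
      calc 128 / lam = lam * n / 128 * (c / n / K) := by rw [hc]; field_simp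
        _ ≤ _ := by gcongr
    calc Real.exp (k0 * -(c / n / K)) ≤ Real.exp (-(128 / lam)) := Real.exp_le_exp.2 (by linarith)
      _ ≤ 1 / (128 / lam) := exp_neg_le_inv (by positivity)
      _ = _ := by rw [one_div_div]
  have h1 : (1 + 2 * (1 - c / n / K) ^ k0) ^ n ≤ Real.exp (lam * n / 64) := by
    refine (one_add_pow_le _ (by linarith) n).trans (Real.exp_le_exp.2 ?_)
    nlinarith
  have h2 : (1/2 : ℝ) ^ b ≤ Real.exp (1/2) * Real.exp (-(lam * n / 32)) := by
    rw [← Real.exp_add]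
    exact (half_pow_le b).trans (Real.exp_le_exp.2 (by linarith))
  have h3 : Real.exp (1/2) ≤ 2 := by
    have h := Real.add_one_le_exp (-(1/2) : ℝ)
    rw [Real.exp_neg] at h
    have h' : (1/2 : ℝ) ≤ (Real.exp (1/2))⁻¹ := by linarith
    have h4 := (le_inv_comm₀ (by norm_num) (Real.exp_pos _)).1 h'
    norm_num at h4 ⊢
    exact h4
  calc (1/2 : ℝ) ^ b * (1 + 2 * (1 - c / n / K) ^ k0) ^ n
      ≤ (2 * Real.exp (-(lam * n / 32))) * Real.exp (lam * n / 64) := by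
        apply mul_le_mul (h2.trans _) h1 (by positivity) (by positivity)
        gcongr
    _ = 2 * Real.exp (-(lam * n / 64)) := by
        rw [mul_assoc, ← Real.exp_add]; congr 2; ring
    _ ≤ 2 * (1 / (lam * n / 64)) := by
        gcongr
        exact exp_neg_le_inv (by positivity)
    _ = 128 / (lam * n) := by field_simp; norm_num
    _ ≤ ε := by
        rw [div_le_iff₀ (by positivity)]
        linarith

end PartH

set_option maxHeartbeats 1000000 in
/-- Main theorem: for every `0 < α < 1` and `Δ`, there is `c = c(α, Δ)` such that w.h.p. a
digraph with minimum semidegree at least `αn`, perturbed by the binomial random digraph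
`D(n, c/n)`, contains every fixed `n`-vertex oriented tree of maximum total degree at most `Δ`. -/
theorem stmt_12 (α : ℝ) (hα : 0 < α ∧ α < 1) (Δ : ℕ) :
    ∃ c : ℝ, 0 < c ∧ ∀ ε : ℝ, 0 < ε → ∃ n₀ : ℕ, ∀ n : ℕ, n₀ ≤ n →
    ∀ Dα : Fin n → Fin n → Prop, (∀ a, ¬ Dα a a) →
      (∀ v : Fin n, α * n ≤ ({x | Dα v x}.ncard : ℝ) ∧ α * n ≤ ({x | Dα x v}.ncard : ℝ)) →
    ∀ T : Fin n → Fin n → Prop, (∀ a, ¬ T a a) → (∀ a b, T a b → ¬ T b a) →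
      (SimpleGraph.fromRel T).IsTree →
      (∀ v : Fin n, {u | T v u}.ncard + {u | T u v}.ncard ≤ Δ) →
    1 - ENNReal.ofReal ε ≤
      (Measure.pi fun _ : Fin n × Fin n =>
          (ENNReal.ofReal (c / n)) • Measure.dirac true +
          (ENNReal.ofReal (1 - c / n)) • Measure.dirac false)
        {ω | ∃ φ : Fin n → Fin n, Function.Injective φ ∧
          ∀ a b, T a b → (Dα (φ a) (φ b) ∨ ω (φ a, φ b) = true)} := by
  obtain ⟨hα0, hα1⟩ := hα
  set kD : ℝ := (α / 2) ^ (Δ + 2) with hkD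
  have hkD0 : 0 < kD := by positivity
  have hkD1 : kD ≤ 1 := pow_le_one₀ (by linarith) (by linarith)
  set M : ℝ := ((Δ:ℝ) + 1) * ((Δ:ℝ) + 2) ^ 2 with hM
  have hM1 : 1 ≤ M := by
    have : (0:ℝ) ≤ Δ := by positivity
    rw [hM]; nlinarith [sq_nonneg ((Δ:ℝ) + 2), mul_nonneg this (sq_nonneg ((Δ:ℝ) + 2))]
  set lam : ℝ := kD / 2 * (α / (8 * M)) with hlam
  have hl : 0 < lam := by positivity
  have hl1 : lam ≤ 1 := by
    have h1 : α / (8 * M) ≤ 1 := by rw [div_le_one (by positivity)]; linarith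
    have h2 : 0 < α / (8 * M) := by positivity
    rw [hlam]; nlinarith
  set c : ℝ := 128 ^ 2 * (4 * (Δ + 1)) / lam ^ 2 with hc
  have hcpos : 0 < c := by positivity
  refine ⟨c, hcpos, fun ε hε => ?_⟩
  refine ⟨⌈1 + c + 128 / lam + 128 / (lam * ε) + 96 / lam ^ 3 + 4 / α + 16 * Δ / α⌉₊,
    fun n hn Dα _ hD T _ hT hTr hΔ => ?_⟩
  have hnn := (Nat.le_ceil _).trans (Nat.cast_le (α := ℝ).2 hn)
  have e1 : 0 < 128 / lam := by positivity
  have e2 : 0 < 128 / (lam * ε) := by positivity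
  have e3 : 0 < 96 / lam ^ 3 := by positivity
  have e4 : 0 < 4 / α := by positivity
  have e5 : 0 ≤ 16 * Δ / α := by positivity
  have hn1 : (1:ℝ) ≤ n := by linarith
  have hnc : c ≤ n := by linarith
  have hn0 : 0 < n := by
    have : (1:ℕ) ≤ n := by exact_mod_cast hn1
    omega
  have hnR : (0:ℝ) < n := by linarith
  have hn4 : 4 / α ≤ n := by linarith
  have hn5 : 16 * Δ / α ≤ n := by linarith
  rw [div_le_iff₀ hα0] at hn4 hn5
  have hcn : c / n ≤ 1 := by rw [div_le_one hnR]; exact hnc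
  set m0 := ⌊α * n / 2⌋₊ with hm0
  have hm0a : (m0:ℝ) ≤ α * n / 2 := Nat.floor_le (by positivity)
  have hm0b : α * n / 4 ≤ (m0:ℝ) := by
    have := Nat.lt_floor_add_one (α * n / 2)
    rw [← hm0] at this
    linarith
  have hm0p : 0 < m0 := by
    have : (0:ℝ) < m0 := by nlinarith
    exact_mod_cast this
  have hm0n : (m0:ℝ) ≤ n / 2 := by nlinarith
  have hm0lt : m0 < n := by
    have : (m0:ℝ) < n := by linarith
    exact_mod_cast this
  set k0 := ⌊lam * n / 64⌋₊ with hk0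
  have hk0a : (k0:ℝ) ≤ lam * n / 64 := Nat.floor_le (by positivity)
  have hk0b : lam * n / 64 - 1 ≤ (k0:ℝ) := (Nat.sub_one_lt_floor _).le
  set b := ⌊lam * n / 16⌋₊ with hb
  have hba : (b:ℝ) ≤ lam * n / 16 := Nat.floor_le (by positivity)
  have hbb : lam * n / 16 - 1 ≤ (b:ℝ) := (Nat.sub_one_lt_floor _).le
  refine assembly α n Δ hn0 c hcpos hcn Dα hD T hT hTr hΔ m0 hm0p hm0lt (α / 2) (lam / 8)
    (by linarith) (by linarith) (by linarith) (by linarith) k0 b ?_ ?_ ε ?_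
  · have h1 : (k0:ℝ) * (1 + lam / 8) ≤ lam * n / 64 * 2 := by
      apply mul_le_mul hk0a (by linarith) (by linarith) (by positivity)
    have h2 : lam / 8 * (n / 2) ≤ lam / 8 * (n - m0) :=
      mul_le_mul_of_nonneg_left (by linarith) (by linarith)
    nlinarith [mul_pos hl hnR]
  · intro σ hσ
    refine num_one lam kD hl hkD1 n σ b k0 ?_ hba hk0a (by linarith)
    have h1 : (m0:ℝ) ≤ Δ * (σ * (Δ + 2) ^ 2 + 2) := by exact_mod_cast hσ
    have h2 : α * n ≤ 8 * M * σ := by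
      have h3 : (Δ:ℝ) * (σ * (Δ + 2) ^ 2) ≤ M * σ := by
        have : (0:ℝ) ≤ σ * (Δ + 2) ^ 2 := by positivity
        have h4 : M * σ = (Δ:ℝ) * (σ * (Δ + 2) ^ 2) + σ * (Δ + 2) ^ 2 := by rw [hM]; ring
        linarith
      rw [mul_add] at h1
      linarith
    rw [hlam, mul_assoc]
    apply mul_le_mul_of_nonneg_left _ (by positivity)
    rw [div_mul_eq_mul_div, div_le_iff₀ (by positivity)]
    linarith
  · refine num_two lam (4 * (Δ + 1)) c ε hl (by positivity) hε hc n b k0 hn0 hbb hk0b (by linarith) ?_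
      (by linarith)
    apply (div_le_self (by positivity) _).trans hcn
    have : (0:ℝ) ≤ Δ := by positivity
    linarith
end
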